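/- arXiv:1106.6343 — 3 statements merged into one kernel-verified Lean document; each statement's English description precedes it below -/
import Mathlib

section
/- Let α = (a_{νμ}) ∈ K^I be such that C_α is a nodal curve with at least one node, and let m_α = ({A_{νμ} − a_{νμ}}) be the corresponding maximal ideal of R. Then the localization of R/(Δ) at m_α is a regular local ring if and only if C_α has exactly one node. -/
open MvPolynomial

set_option synthInstance.maxHeartbeats 1000000
set_option maxHeartbeats 1000000

def idxSet (p q : ℕ) : Finset (ℕ × ℕ) :=
  (Finset.range q ×ˢ Finset.range p).filter fun t => t.1 * p + t.2 * q < p * q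

/-- `R = K[{A_νμ}]`, the polynomial ring in the indeterminates `A_νμ`, `(ν,μ) ∈ I`. -/
abbrev coefRing (K : Type) [Field K] (p q : ℕ) := MvPolynomial ↥(idxSet p q) K

/-- `R[X,Y]`, with `X 0 = X` and `X 1 = Y`. -/
abbrev genRing (K : Type) [Field K] (p q : ℕ) := MvPolynomial (Fin 2) (coefRing K p q)

/-- The generic normed Weierstraß polynomial
`F = Y^p − X^q + Σ_{(ν,μ) ∈ I} A_νμ X^ν Y^μ ∈ R[X,Y]` of type `p,q`. -/
noncomputable def genF (K : Type) [Field K] (p q : ℕ) : genRing K p q :=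
  X 1 ^ p - X 0 ^ q +
    ∑ i : idxSet p q, C (MvPolynomial.X i) * X 0 ^ (i : ℕ × ℕ).1 * X 1 ^ (i : ℕ × ℕ).2

/-- The determinant `Δ ∈ R` of the `R`-linear endomorphism of `N = R[X,Y]/(F_X, F_Y)`
given by multiplication by the residue class of `F`. -/
noncomputable def genDelta (K : Type) [Field K] (p q : ℕ) : coefRing K p q :=
  LinearMap.det
    (LinearMap.mul (coefRing K p q)
      (genRing K p q ⧸ Ideal.span {pderiv 0 (genF K p q), pderiv 1 (genF K p q)})
      (Ideal.Quotient.mk (Ideal.span {pderiv 0 (genF K p q), pderiv 1 (genF K p q)})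
        (genF K p q)))

/-- The normed Weierstraß polynomial `F_a = Y^p − X^q + Σ a_νμ X^ν Y^μ ∈ K[X,Y]`. -/
noncomputable def wPoly (K : Type) [CommRing K] (p q : ℕ) (a : idxSet p q → K) :
    MvPolynomial (Fin 2) K :=
  X 1 ^ p - X 0 ^ q + ∑ i : idxSet p q, C (a i) * X 0 ^ (i : ℕ × ℕ).1 * X 1 ^ (i : ℕ × ℕ).2

/-- `P` is a singular point of the curve `G = 0`. -/
def IsSingAt (K : Type) [CommRing K] (G : MvPolynomial (Fin 2) K) (P : K × K) : Prop :=
  eval ![P.1, P.2] G = 0 ∧ eval ![P.1, P.2] (pderiv 0 G) = 0 ∧ eval ![P.1, P.2] (pderiv 1 G) = 0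

/-- The Hessian determinant `G_{XX} G_{YY} − G_{XY}²` of a polynomial in `X, Y`. -/
noncomputable def hessPoly (K : Type) [CommRing K] (G : MvPolynomial (Fin 2) K) :
    MvPolynomial (Fin 2) K :=
  pderiv 0 (pderiv 0 G) * pderiv 1 (pderiv 1 G) - (pderiv 0 (pderiv 1 G)) ^ 2

/-- `P` is a node of the curve `G = 0`. -/
def IsNodeAt (K : Type) [CommRing K] (G : MvPolynomial (Fin 2) K) (P : K × K) : Prop :=
  IsSingAt K G P ∧ eval ![P.1, P.2] (hessPoly K G) ≠ 0

/-- A commutative ring is a regular local ring iff it is a Noetherian local ring whose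
maximal ideal can be generated by (Krull dimension)-many elements. -/
def IsRegularLocal (S : Type) [CommRing S] : Prop :=
  IsNoetherianRing S ∧
    ∃ h : IsLocalRing S, ∃ s : Finset S,
      Ideal.span (s : Set S) = @IsLocalRing.maximalIdeal S _ h ∧
        (s.card : WithBot (WithTop ℕ)) = ringKrullDim S

/-- The maximal ideal `m_a = ({A_νμ − a_νμ})` of `R`, i.e. the kernel of evaluation at `a`. -/
noncomputable def ptMaxIdeal (K : Type) [Field K] (p q : ℕ) (a : idxSet p q → K) :
    Ideal (coefRing K p q) :=
  RingHom.ker (eval a : coefRing K p q →+* K)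

/-- The image of `m_a` in `R/(Δ)`. -/
noncomputable def ptMaxIdealBar (K : Type) [Field K] (p q : ℕ) (a : idxSet p q → K) :
    Ideal (coefRing K p q ⧸ Ideal.span {genDelta K p q}) :=
  Ideal.map (Ideal.Quotient.mk (Ideal.span {genDelta K p q})) (ptMaxIdeal K p q a)

/-- The polynomials all of whose monomials have `w`-weight less than `n`. -/
noncomputable abbrev weightLT {σ : Type*} (S : Type*) [CommRing S] (w : (σ →₀ ℕ) →+ ℕ) (n : ℕ) :
    Submodule S (MvPolynomial σ S) :=
  restrictSupport S {m | w m < n}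

section Unitriangular

variable {σ S : Type*} [CommRing S] (w : (σ →₀ ℕ) →+ ℕ)

lemma weightLT_induction {P : Submodule S (MvPolynomial σ S)}
    (h : ∀ m, weightLT S w (w m) ≤ P → monomial m 1 ∈ P) : P = ⊤ := by
  have key : ∀ n, weightLT S w n ≤ P := by
    intro n
    induction n using Nat.strong_induction_on with
    | _ n ih =>
      rw [weightLT, restrictSupport_eq_span, Submodule.span_le]
      rintro _ ⟨m, hm, rfl⟩
      exact h m (ih _ hm)
  rw [eq_top_iff]
  intro f _
  induction f using MvPolynomial.induction_on' with
  | monomial m c =>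
    rw [← mul_one c, ← smul_eq_mul, ← smul_monomial]
    exact P.smul_mem _ (h m (key _))
  | add f g hf hg => exact P.add_mem (hf trivial) (hg trivial)

lemma monomial_mul_mem_weightLT {m : σ →₀ ℕ} {n k : ℕ} {f : MvPolynomial σ S}
    (hf : f ∈ weightLT S w n) (hk : w m + n ≤ k) : monomial m 1 * f ∈ weightLT S w k := by
  rw [weightLT, restrictSupport_eq_span] at hf
  induction hf using Submodule.span_induction with
  | mem x hx =>
    obtain ⟨l, hl, rfl⟩ := hx
    simp only [monomial_mul, monomial_mem_restrictSupport, Set.mem_ofPred_eq, map_add] at hl ⊢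
    left; omega
  | zero => simp
  | add x y _ _ hx hy => rw [mul_add]; exact add_mem hx hy
  | smul c x _ hx => rw [mul_smul_comm]; exact Submodule.smul_mem _ _ hx

variable {w} {v : (σ →₀ ℕ) → MvPolynomial σ S}

lemma span_range_eq_top_of_unitriangular
    (hv : ∀ m, v m - monomial m 1 ∈ weightLT S w (w m)) :
    Submodule.span S (Set.range v) = ⊤ := by
  refine weightLT_induction w fun m hm => ?_
  rw [← sub_sub_self (v m) (monomial m 1)]
  exact sub_mem (Submodule.subset_span ⟨m, rfl⟩) (hm (hv m))

lemma linearIndependent_of_unitriangular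
    (hv : ∀ m, v m - monomial m 1 ∈ weightLT S w (w m)) : LinearIndependent S v := by
  classical
  rw [linearIndependent_iff]
  intro c hc
  by_contra hne
  obtain ⟨m, hm, hmax⟩ := Finset.exists_max_image c.support w
    (Finsupp.support_nonempty_iff.mpr hne)
  apply Finsupp.mem_support_iff.mp hm
  have hcoeff : ∀ l ∈ c.support, coeff m (v l) = if l = m then 1 else 0 := by
    intro l hl
    have h0 : coeff m (v l - monomial l 1) = 0 := by
      by_contra h
      have := (mem_restrictSupport_iff S).mp (hv l) (mem_support_iff.mpr h)
      exact absurd (hmax l hl) (not_le.mpr this)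
    rw [coeff_sub, coeff_monomial, sub_eq_zero] at h0
    exact h0
  have := congrArg (coeff m) hc
  rw [Finsupp.linearCombination_apply, Finsupp.sum, coeff_sum, coeff_zero] at this
  rw [← this, Finset.sum_congr rfl fun l hl => by rw [coeff_smul, hcoeff l hl]]
  simp only [smul_eq_mul, mul_ite, mul_one, mul_zero, Finset.sum_ite_eq', hm, if_true]

end Unitriangular

section TwoVariables

variable {S : Type*} [CommRing S] {w : (Fin 2 →₀ ℕ) →+ ℕ} {d e : ℕ}
  {G H : MvPolynomial (Fin 2) S}

/-- The exponent vector of `X ^ i * Y ^ j`. -/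
noncomputable def expVec (i j : ℕ) : Fin 2 →₀ ℕ := Finsupp.single 0 i + Finsupp.single 1 j

lemma expVec_zero_apply (i j : ℕ) : expVec i j 0 = i := by simp [expVec]

lemma expVec_one_apply (i j : ℕ) : expVec i j 1 = j := by simp [expVec]

lemma eq_expVec (m : Fin 2 →₀ ℕ) : m = expVec (m 0) (m 1) := by
  ext i; fin_cases i <;> simp [expVec]

lemma expVec_add (i j k l : ℕ) : expVec (i + k) (j + l) = expVec i j + expVec k l := by
  ext a; fin_cases a <;> simp [expVec]

lemma monomial_expVec (i j : ℕ) :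
    (monomial (expVec i j) 1 : MvPolynomial (Fin 2) S) = X 0 ^ i * X 1 ^ j := by
  rw [X_pow_eq_monomial, X_pow_eq_monomial, monomial_mul, one_mul, expVec]

/-- The family replacing a monomial divisible by `Y ^ e` by a multiple of `H`, and a remaining
one divisible by `X ^ d` by a multiple of `G`. -/
noncomputable def reducedFamily (d e : ℕ) (G H : MvPolynomial (Fin 2) S) (m : Fin 2 →₀ ℕ) :
    MvPolynomial (Fin 2) S :=
  if e ≤ m 1 then monomial (expVec (m 0) (m 1 - e)) 1 * H
  else if d ≤ m 0 then monomial (expVec (m 0 - d) (m 1)) 1 * G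
  else monomial m 1

lemma reducedFamily_sub_mem
    (hG : G - monomial (expVec d 0) 1 ∈ weightLT S w (w (expVec d 0)))
    (hH : H - monomial (expVec 0 e) 1 ∈ weightLT S w (w (expVec 0 e))) (m : Fin 2 →₀ ℕ) :
    reducedFamily d e G H m - monomial m 1 ∈ weightLT S w (w m) := by
  unfold reducedFamily
  split_ifs with h1 h2
  · have hm : m = expVec (m 0) (m 1 - e) + expVec 0 e := by
      rw [← expVec_add]; conv_lhs => rw [eq_expVec m]
      congr 1; omega
    have : (monomial m 1 : MvPolynomial (Fin 2) S) =
        monomial (expVec (m 0) (m 1 - e)) 1 * monomial (expVec 0 e) 1 := by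
      rw [monomial_mul, ← hm, one_mul]
    rw [this, ← mul_sub]
    refine monomial_mul_mem_weightLT w hH ?_
    conv_rhs => rw [hm]
    rw [map_add]
  · have hm : m = expVec (m 0 - d) (m 1) + expVec d 0 := by
      rw [← expVec_add]; conv_lhs => rw [eq_expVec m]
      congr 1; omega
    have : (monomial m 1 : MvPolynomial (Fin 2) S) =
        monomial (expVec (m 0 - d) (m 1)) 1 * monomial (expVec d 0) 1 := by
      rw [monomial_mul, ← hm, one_mul]
    rw [this, ← mul_sub]
    refine monomial_mul_mem_weightLT w hG ?_
    conv_rhs => rw [hm]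
    rw [map_add]
  · simp

lemma span_reducedFamily_compl_box
    (hH : H - monomial (expVec 0 e) 1 ∈ weightLT S w (w (expVec 0 e))) :
    Submodule.span S (reducedFamily d e G H '' {m | m 0 < d ∧ m 1 < e}ᶜ) =
      (Ideal.span {G, H}).restrictScalars S := by
  apply le_antisymm
  · rw [Submodule.span_le]
    rintro _ ⟨m, hm, rfl⟩
    simp only [Set.mem_compl_iff, Set.mem_ofPred_eq, not_and_or, not_lt] at hm
    change _ ∈ Ideal.span {G, H}
    unfold reducedFamily
    split_ifs with h1 h2
    · exact Ideal.mul_mem_left _ _ (Ideal.subset_span (by simp))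
    · exact Ideal.mul_mem_left _ _ (Ideal.subset_span (by simp))
    · omega
  · set P := Submodule.span S (reducedFamily d e G H '' {m | m 0 < d ∧ m 1 < e}ᶜ)
    have hPH : ∀ U, U * H ∈ P := by
      have : P.comap (LinearMap.mulRight S H) = ⊤ := by
        refine weightLT_induction w fun m _ => ?_
        refine Submodule.subset_span ⟨m + expVec 0 e, ?_, ?_⟩
        · simp [expVec_one_apply]
        · simp [reducedFamily, expVec_one_apply, expVec_zero_apply, ← eq_expVec]
      intro U
      exact (this ▸ Submodule.mem_top : U ∈ P.comap (LinearMap.mulRight S H))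
    have hPG : ∀ U, U * G ∈ P := by
      have : P.comap (LinearMap.mulRight S G) = ⊤ := by
        refine weightLT_induction w fun m ih => ?_
        simp only [Submodule.mem_comap, LinearMap.mulRight_apply]
        by_cases h : e ≤ m 1
        · have hm : m = expVec (m 0) (m 1 - e) + expVec 0 e := by
            rw [← expVec_add]; conv_lhs => rw [eq_expVec m]
            congr 1; omega
          have hlow : monomial (expVec (m 0) (m 1 - e)) 1 * (H - monomial (expVec 0 e) 1) * G ∈ P :=
            ih (monomial_mul_mem_weightLT w hH (by conv_rhs => rw [hm, map_add]))
          have : (monomial m 1 : MvPolynomial (Fin 2) S) =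
              monomial (expVec (m 0) (m 1 - e)) 1 * monomial (expVec 0 e) 1 := by
            rw [monomial_mul, ← hm, one_mul]
          have heq : monomial m 1 * G = (monomial (expVec (m 0) (m 1 - e)) 1 * G) * H -
              monomial (expVec (m 0) (m 1 - e)) 1 * (H - monomial (expVec 0 e) 1) * G := by
            rw [this]; ring
          rw [heq]
          exact sub_mem (hPH _) hlow
        · refine Submodule.subset_span ⟨m + expVec d 0, ?_, ?_⟩
          · simp [expVec_zero_apply]
          · simp [reducedFamily, expVec_one_apply, expVec_zero_apply, ← eq_expVec, h]
      intro U
      exact (this ▸ Submodule.mem_top : U ∈ P.comap (LinearMap.mulRight S G))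
    intro f hf
    obtain ⟨a, b, rfl⟩ := Ideal.mem_span_pair.mp (Submodule.restrictScalars_mem _ _ _ |>.mp hf)
    exact add_mem (hPG a) (hPH b)

lemma exists_basis_quotient_span_pair_of_monic
    (hG : G - monomial (expVec d 0) 1 ∈ weightLT S w (w (expVec d 0)))
    (hH : H - monomial (expVec 0 e) 1 ∈ weightLT S w (w (expVec 0 e))) :
    ∃ b : Module.Basis (Fin d × Fin e) S (MvPolynomial (Fin 2) S ⧸ Ideal.span {G, H}),
      ∀ i, b i = Ideal.Quotient.mk _ (X 0 ^ (i.1 : ℕ) * X 1 ^ (i.2 : ℕ)) := by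
  set J := Ideal.span {G, H}
  have hv := reducedFamily_sub_mem (d := d) (e := e) hG hH
  have hli := linearIndependent_of_unitriangular hv
  let ι : Fin d × Fin e → (Fin 2 →₀ ℕ) := fun i => expVec i.1 i.2
  have hι : Function.Injective ι := by
    intro i j hij
    have h0 := DFunLike.congr_fun hij 0
    have h1 := DFunLike.congr_fun hij 1
    simp only [ι, expVec_zero_apply, expVec_one_apply] at h0 h1
    exact Prod.ext (Fin.ext h0) (Fin.ext h1)
  have hbox : Set.range ι ⊆ {m | m 0 < d ∧ m 1 < e} := by
    rintro _ ⟨i, rfl⟩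
    simp [ι, expVec_zero_apply, expVec_one_apply]
  have hvι : ∀ i, reducedFamily d e G H (ι i) = X 0 ^ (i.1 : ℕ) * X 1 ^ (i.2 : ℕ) := by
    intro i
    simp [reducedFamily, ι, expVec_zero_apply, expVec_one_apply, monomial_expVec, i.1.2.not_ge,
      i.2.2.not_ge]
  let π : MvPolynomial (Fin 2) S →ₗ[S] MvPolynomial (Fin 2) S ⧸ J :=
    (Ideal.Quotient.mkₐ S J).toLinearMap
  have hker : LinearMap.ker π = J.restrictScalars S := by
    ext f; simp [π, Ideal.Quotient.eq_zero_iff_mem]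
  have hli' : LinearIndependent S (π ∘ (reducedFamily d e G H ∘ ι)) := by
    refine (hli.comp ι hι).map ?_
    rw [hker, ← span_reducedFamily_compl_box hH, Set.range_comp]
    exact hli.disjoint_span_image (Set.disjoint_compl_right_iff_subset.mpr hbox)
  have hsp : ⊤ ≤ Submodule.span S (Set.range (π ∘ (reducedFamily d e G H ∘ ι))) := by
    have hπ : Function.Surjective π := Ideal.Quotient.mk_surjective
    rw [← LinearMap.range_eq_top.mpr hπ, LinearMap.range_eq_map,
      ← span_range_eq_top_of_unitriangular hv, Submodule.map_span, Submodule.span_le]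
    rintro _ ⟨_, ⟨m, rfl⟩, rfl⟩
    by_cases hm : m 0 < d ∧ m 1 < e
    · refine Submodule.subset_span ⟨(⟨m 0, hm.1⟩, ⟨m 1, hm.2⟩), ?_⟩
      simp only [Function.comp_apply, ι, ← eq_expVec]
    · have : reducedFamily d e G H m ∈ LinearMap.ker π := by
        rw [hker, ← span_reducedFamily_compl_box hH]
        exact Submodule.subset_span ⟨m, hm, rfl⟩
      rw [LinearMap.mem_ker.mp this]
      exact zero_mem _
  refine ⟨Module.Basis.mk hli' hsp, fun i => ?_⟩
  rw [Module.Basis.mk_apply, Function.comp_apply, Function.comp_apply, hvι]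
  rfl

end TwoVariables

section Jacobian

variable {S : Type} [CommRing S] {p q : ℕ}

/-- The ideal generated by the partial derivatives of `wPoly S p q a`. -/
noncomputable def jacIdeal (a : idxSet p q → S) : Ideal (MvPolynomial (Fin 2) S) :=
  Ideal.span {pderiv 0 (wPoly S p q a), pderiv 1 (wPoly S p q a)}

/-- The weight on exponent vectors giving `X` weight `p` and `Y` weight `q`. -/
def quasiWeight (p q : ℕ) : (Fin 2 →₀ ℕ) →+ ℕ where
  toFun m := p * m 0 + q * m 1
  map_zero' := by simp
  map_add' m n := by simp only [Finsupp.add_apply]; ring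

lemma quasiWeight_expVec (i j : ℕ) : quasiWeight p q (expVec i j) = p * i + q * j := by
  simp [quasiWeight, expVec_zero_apply, expVec_one_apply]

lemma pderiv_zero_wPoly (a : idxSet p q → S) :
    pderiv 0 (wPoly S p q a) = - (C (q : S) * monomial (expVec (q - 1) 0) 1) +
      ∑ i : idxSet p q, C (a i * (i : ℕ × ℕ).1) *
        monomial (expVec ((i : ℕ × ℕ).1 - 1) (i : ℕ × ℕ).2) 1 := by
  simp only [wPoly, map_add, map_sub, map_sum, monomial_expVec, Derivation.leibniz, pderiv_C,
    Derivation.leibniz_pow, pderiv_X_self, pderiv_X_of_ne (show (1 : Fin 2) ≠ 0 by decide)]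
  congr 1
  · simp
  · refine Finset.sum_congr rfl fun i _ => ?_
    simp only [smul_eq_mul, nsmul_eq_mul, C_mul, map_natCast]
    ring

lemma pderiv_one_wPoly (a : idxSet p q → S) :
    pderiv 1 (wPoly S p q a) = C (p : S) * monomial (expVec 0 (p - 1)) 1 +
      ∑ i : idxSet p q, C (a i * (i : ℕ × ℕ).2) *
        monomial (expVec (i : ℕ × ℕ).1 ((i : ℕ × ℕ).2 - 1)) 1 := by
  simp only [wPoly, map_add, map_sub, map_sum, monomial_expVec, Derivation.leibniz, pderiv_C,
    Derivation.leibniz_pow, pderiv_X_self, pderiv_X_of_ne (show (0 : Fin 2) ≠ 1 by decide)]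
  congr 1
  · simp
  · refine Finset.sum_congr rfl fun i _ => ?_
    simp only [smul_eq_mul, nsmul_eq_mul, C_mul, map_natCast]
    ring

lemma lt_of_mem_idxSet (i : idxSet p q) :
    p * (i : ℕ × ℕ).1 + q * (i : ℕ × ℕ).2 < p * q := by
  have := (Finset.mem_filter.mp i.2).2
  linarith [mul_comm p (i : ℕ × ℕ).1, mul_comm q (i : ℕ × ℕ).2]

lemma C_mul_mem_weightLT {σ : Type*} {w : (σ →₀ ℕ) →+ ℕ} {n : ℕ} (c : S) {f : MvPolynomial σ S}
    (hf : f ∈ weightLT S w n) : C c * f ∈ weightLT S w n := by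
  rw [C_mul']; exact Submodule.smul_mem _ _ hf

lemma exists_basis_quotient_jacIdeal (hp : 0 < p) (hq : 0 < q) (hpS : IsUnit (p : S))
    (hqS : IsUnit (q : S)) (a : idxSet p q → S) :
    ∃ b : Module.Basis (Fin (q - 1) × Fin (p - 1)) S (MvPolynomial (Fin 2) S ⧸ jacIdeal a),
      ∀ i, b i = Ideal.Quotient.mk _ (X 0 ^ (i.1 : ℕ) * X 1 ^ (i.2 : ℕ)) := by
  obtain ⟨u, hu⟩ := hqS.exists_left_inv
  obtain ⟨v, hv⟩ := hpS.exists_left_inv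
  have hJ : jacIdeal a = Ideal.span {C (-u) * pderiv 0 (wPoly S p q a),
      C v * pderiv 1 (wPoly S p q a)} := by
    apply le_antisymm
    · rw [jacIdeal, Ideal.span_le, Set.insert_subset_iff, Set.singleton_subset_iff]
      constructor
      · have : C (-(q : S)) * (C (-u) * pderiv 0 (wPoly S p q a)) = pderiv 0 (wPoly S p q a) := by
          rw [← mul_assoc, ← C_mul, neg_mul_neg, mul_comm (q : S), hu, C_1, one_mul]
        have hm := Ideal.mul_mem_left _ (C (-(q : S))) (Ideal.subset_span (Set.mem_insert
          (C (-u) * pderiv 0 (wPoly S p q a)) {C v * pderiv 1 (wPoly S p q a)}))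
        rwa [this] at hm
      · have : C (p : S) * (C v * pderiv 1 (wPoly S p q a)) = pderiv 1 (wPoly S p q a) := by
          rw [← mul_assoc, ← C_mul, mul_comm (p : S), hv, C_1, one_mul]
        have hm := Ideal.mul_mem_left _ (C (p : S)) (Ideal.subset_span (Set.mem_insert_of_mem
          (C (-u) * pderiv 0 (wPoly S p q a)) (Set.mem_singleton (C v * pderiv 1 (wPoly S p q a)))))
        rwa [this] at hm
    · rw [jacIdeal, Ideal.span_le, Set.insert_subset_iff, Set.singleton_subset_iff]
      exact ⟨Ideal.mul_mem_left _ _ (Ideal.subset_span (by simp)),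
        Ideal.mul_mem_left _ _ (Ideal.subset_span (by simp))⟩
  rw [hJ]
  refine exists_basis_quotient_span_pair_of_monic (w := quasiWeight p q) ?_ ?_
  · rw [pderiv_zero_wPoly, mul_add, mul_neg, ← mul_assoc, ← C_mul, neg_mul, hu, C_neg, neg_mul,
      neg_neg, C_1, one_mul, add_sub_cancel_left]
    refine C_mul_mem_weightLT _ (sum_mem fun i _ => ?_)
    rcases Nat.eq_zero_or_pos (i : ℕ × ℕ).1 with h0 | h0
    · simp [h0]
    · refine C_mul_mem_weightLT _ ?_
      rw [monomial_mem_restrictSupport]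
      left
      have := lt_of_mem_idxSet i
      obtain ⟨k, hk⟩ := Nat.exists_eq_succ_of_ne_zero h0.ne'
      obtain ⟨q', rfl⟩ := Nat.exists_eq_succ_of_ne_zero hq.ne'
      simp only [Set.mem_ofPred_eq, quasiWeight_expVec, hk, Nat.succ_eq_add_one,
        Nat.add_sub_cancel] at this ⊢
      nlinarith
  · rw [pderiv_one_wPoly, mul_add, ← mul_assoc, ← C_mul, hv, C_1, one_mul, add_sub_cancel_left]
    refine C_mul_mem_weightLT _ (sum_mem fun i _ => ?_)
    rcases Nat.eq_zero_or_pos (i : ℕ × ℕ).2 with h0 | h0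
    · simp [h0]
    · refine C_mul_mem_weightLT _ ?_
      rw [monomial_mem_restrictSupport]
      left
      have := lt_of_mem_idxSet i
      obtain ⟨k, hk⟩ := Nat.exists_eq_succ_of_ne_zero h0.ne'
      obtain ⟨p', rfl⟩ := Nat.exists_eq_succ_of_ne_zero hp.ne'
      simp only [Set.mem_ofPred_eq, quasiWeight_expVec, hk, Nat.succ_eq_add_one,
        Nat.add_sub_cancel] at this ⊢
      nlinarith

lemma map_wPoly {T : Type} [CommRing T] (φ : S →+* T) (a : idxSet p q → S) :
    MvPolynomial.map φ (wPoly S p q a) = wPoly T p q (φ ∘ a) := by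
  simp [wPoly]

lemma map_jacIdeal {T : Type} [CommRing T] (φ : S →+* T) (a : idxSet p q → S) :
    (jacIdeal a).map (MvPolynomial.map φ) = jacIdeal (φ ∘ a) := by
  rw [jacIdeal, jacIdeal, Ideal.map_span, Set.image_pair, ← pderiv_map, ← pderiv_map, map_wPoly]

end Jacobian

section BaseChange

variable {σ ι S T : Type*} [CommRing S] [CommRing T] [Fintype ι] [DecidableEq ι]

lemma leftMulMatrix_quotient_baseChange (φ : S →+* T) {J : Ideal (MvPolynomial σ S)}
    {J' : Ideal (MvPolynomial σ T)} (hJ : J.map (MvPolynomial.map φ) ≤ J')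
    (e : ι → MvPolynomial σ S)
    (b : Module.Basis ι S (MvPolynomial σ S ⧸ J)) (hb : ∀ i, b i = Ideal.Quotient.mk J (e i))
    (b' : Module.Basis ι T (MvPolynomial σ T ⧸ J'))
    (hb' : ∀ i, b' i = Ideal.Quotient.mk J' (MvPolynomial.map φ (e i)))
    (G : MvPolynomial σ S) :
    Algebra.leftMulMatrix b' (Ideal.Quotient.mk J' (MvPolynomial.map φ G)) =
      (Algebra.leftMulMatrix b (Ideal.Quotient.mk J G)).map φ := by
  have key : ∀ f : MvPolynomial σ S, ∀ i,
      b'.repr (Ideal.Quotient.mk J' (MvPolynomial.map φ f)) i =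
        φ (b.repr (Ideal.Quotient.mk J f) i) := by
    intro f
    let Ψ : MvPolynomial σ S ⧸ J →+* MvPolynomial σ T ⧸ J' :=
      Ideal.quotientMap J' (MvPolynomial.map φ) (Ideal.map_le_iff_le_comap.mp hJ)
    have hsmul : ∀ (c : S) (x : MvPolynomial σ S ⧸ J), Ψ (c • x) = φ c • Ψ x := by
      intro c x
      obtain ⟨x, rfl⟩ := Ideal.Quotient.mk_surjective x
      have : c • Ideal.Quotient.mk J x = Ideal.Quotient.mk J (C c * x) := by
        rw [C_mul']; rfl
      rw [this, Ideal.quotientMap_mk, map_mul, map_C, C_mul', Ideal.quotientMap_mk]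
      rfl
    have h1 : Ideal.Quotient.mk J' (MvPolynomial.map φ f) =
        ∑ i, φ (b.repr (Ideal.Quotient.mk J f) i) • b' i := by
      conv_lhs => rw [← Ideal.quotientMap_mk (f := MvPolynomial.map φ)
        (H := Ideal.map_le_iff_le_comap.mp hJ), ← b.sum_repr (Ideal.Quotient.mk J f)]
      change Ψ _ = _
      rw [map_sum]
      refine Finset.sum_congr rfl fun i _ => ?_
      rw [hsmul, hb, hb']
      rfl
    intro i
    rw [h1, b'.repr_sum_self]
  ext i j
  rw [Matrix.map_apply, Algebra.leftMulMatrix_eq_repr_mul, Algebra.leftMulMatrix_eq_repr_mul,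
    hb, hb', ← map_mul, ← map_mul, ← map_mul, key]

end BaseChange

section RegularLocal

open IsLocalRing

lemma isRegularLocal_iff_isRegularLocalRing (S : Type) [CommRing S] :
    IsRegularLocal S ↔ IsRegularLocalRing S := by
  constructor
  · rintro ⟨hN, hL, s, hs, hcard⟩
    refine IsRegularLocalRing.of_spanFinrank_maximalIdeal_le S ?_
    rw [← hcard, ← hs]
    have := Submodule.spanFinrank_span_le_ncard_of_finite (R := S) s.finite_toSet
    rw [Set.ncard_coe_finset] at this
    exact Nat.cast_le (α := WithBot ℕ∞).mpr this
  · intro h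
    obtain ⟨s, hs, hspan⟩ :=
      Submodule.FG.exists_span_finset_card_eq_spanFinrank
        (maximalIdeal S).fg_of_isNoetherianRing
    refine ⟨inferInstance, inferInstance, s, hspan, ?_⟩
    rw [← h.spanFinrank_maximalIdeal, hs]
    rfl

variable {L : Type*} [CommRing L]

lemma map_mk_maximalIdeal [IsLocalRing L] (I : Ideal L) [IsLocalRing (L ⧸ I)] :
    (maximalIdeal L).map (Ideal.Quotient.mk I) = maximalIdeal (L ⧸ I) := by
  have hI : I ≤ maximalIdeal L := le_maximalIdeal fun h =>
    not_subsingleton (L ⧸ I) (Ideal.Quotient.subsingleton_iff.mpr h)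
  exact eq_maximalIdeal (Ideal.IsMaximal.map_of_surjective_of_ker_le
    Ideal.Quotient.mk_surjective (by rwa [Ideal.mk_ker]))

/-- The quotient of a regular local ring by a nonzerodivisor `x` of the maximal ideal is regular
iff `x` is not in the square of the maximal ideal. -/
lemma isRegularLocalRing_quotient_span_singleton_iff [IsRegularLocalRing L] {x : L}
    (hx : x ∈ maximalIdeal L) (hx0 : x ∈ nonZeroDivisors L) :
    IsRegularLocalRing (L ⧸ Ideal.span {x}) ↔ x ∉ maximalIdeal L ^ 2 := by
  classical
  set I := Ideal.span {x} with hI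
  have hIm : I ≤ maximalIdeal L := by rwa [hI, Ideal.span_singleton_le_iff_mem]
  have hnt : Nontrivial (L ⧸ I) := Ideal.Quotient.nontrivial_iff.mpr fun h =>
    (maximalIdeal.isMaximal L).ne_top (top_le_iff.mp (h ▸ hIm))
  have hloc : IsLocalRing (L ⧸ I) := IsLocalRing.of_surjective' _ Ideal.Quotient.mk_surjective
  have hdim := ringKrullDim_quotient_span_singleton_succ_eq_ringKrullDim_of_mem_nonZeroDivisors
    hx0 hx
  have hreg := IsRegularLocalRing.spanFinrank_maximalIdeal (R := L)
  rw [← hI, ← hreg] at hdim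
  constructor
  · intro h hx2
    have hreg' := h.spanFinrank_maximalIdeal
    rw [← hreg'] at hdim
    have hdim' : (maximalIdeal (L ⧸ I)).spanFinrank + 1 = (maximalIdeal L).spanFinrank := by
      exact_mod_cast hdim
    obtain ⟨s, hs, hspan⟩ :=
      Submodule.FG.exists_span_finset_card_eq_spanFinrank
        (maximalIdeal (L ⧸ I)).fg_of_isNoetherianRing
    let t : Finset L := s.image (Function.surjInv Ideal.Quotient.mk_surjective)
    have ht : (Ideal.span (t : Set L)).map (Ideal.Quotient.mk I) = maximalIdeal (L ⧸ I) := by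
      rw [Ideal.map_span, Finset.coe_image, ← Set.image_comp]
      rw [show (Ideal.Quotient.mk I : L → L ⧸ I) ∘ Function.surjInv Ideal.Quotient.mk_surjective
        = id from funext (Function.surjInv_eq _), Set.image_id]
      exact hspan
    have hle : Ideal.span (t : Set L) ⊔ I = maximalIdeal L := by
      have := congrArg (Ideal.comap (Ideal.Quotient.mk I)) ht
      rwa [← map_mk_maximalIdeal, Ideal.comap_map_of_surjective' _ Ideal.Quotient.mk_surjective,
        Ideal.comap_map_of_surjective' _ Ideal.Quotient.mk_surjective, Ideal.mk_ker,
        sup_eq_left.mpr hIm] at this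
    have hnak : maximalIdeal L ≤ Ideal.span (t : Set L) := by
      refine Submodule.le_of_le_smul_of_le_jacobson_bot (I := maximalIdeal L)
        (maximalIdeal L).fg_of_isNoetherianRing (maximalIdeal_le_jacobson _) ?_
      conv_lhs => rw [← hle]
      refine sup_le_sup le_rfl ?_
      rw [smul_eq_mul, ← pow_two, hI, Ideal.span_singleton_le_iff_mem]
      exact hx2
    have heq : maximalIdeal L = Ideal.span (t : Set L) :=
      le_antisymm hnak (le_sup_left.trans hle.le)
    have h1 := Submodule.spanFinrank_span_le_ncard_of_finite (R := L) t.finite_toSet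
    rw [Set.ncard_coe_finset] at h1
    have h2 : t.card ≤ s.card := Finset.card_image_le
    have h3 : (maximalIdeal L).spanFinrank = (Submodule.span L (t : Set L)).spanFinrank :=
      congrArg _ heq
    omega
  · intro hx2
    obtain ⟨s, hs, hspan⟩ :=
      Submodule.FG.exists_span_finset_card_eq_spanFinrank
        (maximalIdeal L).fg_of_isNoetherianRing
    have hsm : ∀ y ∈ s, y ∈ maximalIdeal L := fun y hy => hspan ▸ Submodule.subset_span hy
    obtain ⟨c, -, hc⟩ := Submodule.mem_span_finset.mp (hspan.symm ▸ hx)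
    obtain ⟨y, hys, hy⟩ : ∃ y ∈ s, IsUnit (c y) := by
      by_contra hcon
      push Not at hcon
      apply hx2
      rw [← hc, pow_two]
      exact sum_mem fun y hy => Ideal.mul_mem_mul ((mem_maximalIdeal _).mpr (hcon y hy)) (hsm y hy)
    let t : Finset (L ⧸ I) := (s.erase y).image (Ideal.Quotient.mk I)
    have ht : maximalIdeal (L ⧸ I) = Ideal.span (t : Set (L ⧸ I)) := by
      rw [← map_mk_maximalIdeal, ← hspan]
      change Ideal.map _ (Ideal.span _) = _
      rw [Ideal.map_span]
      apply le_antisymm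
      · rw [Ideal.span_le]
        rintro _ ⟨z, hz, rfl⟩
        by_cases hzy : z = y
        · subst hzy
          have h0 : Ideal.Quotient.mk I (c z) * Ideal.Quotient.mk I z ∈
              Ideal.span (t : Set (L ⧸ I)) := by
            have hxz : Ideal.Quotient.mk I x = 0 :=
              Ideal.Quotient.eq_zero_iff_mem.mpr (Ideal.mem_span_singleton_self x)
            rw [← hc, ← Finset.add_sum_erase s _ hys, map_add, add_eq_zero_iff_eq_neg,
              smul_eq_mul, map_mul] at hxz
            rw [hxz, neg_mem_iff, map_sum]
            refine sum_mem fun k hk => ?_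
            rw [smul_eq_mul, map_mul]
            exact Ideal.mul_mem_left _ _ (Ideal.subset_span
              (Finset.mem_coe.mpr (Finset.mem_image_of_mem _ hk)))
          exact (Ideal.unit_mul_mem_iff_mem _ (hy.map (Ideal.Quotient.mk I))).mp h0
        · exact Ideal.subset_span (Finset.mem_coe.mpr
            (Finset.mem_image_of_mem _ (Finset.mem_erase.mpr ⟨hzy, hz⟩)))
      · apply Ideal.span_mono
        rw [Finset.coe_image]
        exact Set.image_mono (Finset.coe_subset.mpr (Finset.erase_subset _ _))
    refine IsRegularLocalRing.of_spanFinrank_maximalIdeal_le _ ?_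
    have h1 := Submodule.spanFinrank_span_le_ncard_of_finite (R := L ⧸ I) t.finite_toSet
    rw [Set.ncard_coe_finset] at h1
    have h2 : t.card ≤ (s.erase y).card := Finset.card_image_le
    rw [Finset.card_erase_of_mem hys] at h2
    have h4 : 0 < s.card := Finset.card_pos.mpr ⟨y, hys⟩
    have h3 : (maximalIdeal (L ⧸ I)).spanFinrank =
        (Submodule.span (L ⧸ I) (t : Set (L ⧸ I))).spanFinrank := congrArg _ ht
    have h5 : (maximalIdeal (L ⧸ I)).spanFinrank + 1 ≤ (maximalIdeal L).spanFinrank := by omega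
    have h6 : (((maximalIdeal (L ⧸ I)).spanFinrank : WithBot ℕ∞) + 1) ≤
        ringKrullDim (L ⧸ I) + 1 := by
      rw [hdim]; exact_mod_cast h5
    exact ENat.WithBot.add_le_add_one_right_iff.mp h6

/-- Localizing `R ⧸ (x)` at the image of a maximal ideal `m` gives a regular local ring iff
no multiple of `x` by an element outside `m` lies in `m ^ 2`. -/
lemma isRegularLocal_localization_quotient_iff {R : Type} [CommRing R] [IsDomain R]
    [IsRegularRing R] (m : Ideal R) [hm : m.IsMaximal] {x : R} (hx0 : x ≠ 0)
    (hmax : (m.map (Ideal.Quotient.mk (Ideal.span {x}))).IsMaximal) :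
    IsRegularLocal (Localization.AtPrime (m.map (Ideal.Quotient.mk (Ideal.span {x})))
      (hp := hmax.isPrime)) ↔ ∀ s ∉ m, s * x ∉ m ^ 2 := by
  have := hmax.isPrime
  set I := Ideal.span {x} with hI
  set M := m.map (Ideal.Quotient.mk I) with hM
  have hcomap : M.comap (Ideal.Quotient.mk I) = m ⊔ I := by
    rw [hM, Ideal.comap_map_of_surjective' _ Ideal.Quotient.mk_surjective, Ideal.mk_ker]
  have hcm : M.comap (Ideal.Quotient.mk I) = m :=
    (hm.eq_of_le (Ideal.comap_ne_top _ hmax.ne_top) (hcomap ▸ le_sup_left)).symm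
  have hxm : x ∈ m := by
    have : I ≤ m := by rw [← hcm, hcomap]; exact le_sup_right
    exact this (Ideal.mem_span_singleton_self x)
  let L := Localization.AtPrime m
  have hsub : Algebra.algebraMapSubmonoid (R ⧸ I) m.primeCompl = M.primeCompl := by
    ext y
    obtain ⟨y, rfl⟩ := Ideal.Quotient.mk_surjective y
    constructor
    · rintro ⟨z, hz, hzy⟩ hy
      rw [← hzy] at hy
      exact hz (hcm ▸ Ideal.mem_comap.mpr hy)
    · intro hy
      exact ⟨y, fun h => hy (Ideal.mem_map_of_mem _ h), rfl⟩
  have hloc : IsLocalization M.primeCompl (L ⧸ I.map (algebraMap R L)) := by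
    rw [← hsub]; infer_instance
  let e : Localization.AtPrime M ≃+* L ⧸ I.map (algebraMap R L) :=
    (IsLocalization.algEquiv M.primeCompl _ _).toRingEquiv
  have hmapI : I.map (algebraMap R L) = Ideal.span {algebraMap R L x} := by
    rw [hI, Ideal.map_span, Set.image_singleton]
  let e' := e.trans (Ideal.quotEquivOfEq hmapI)
  have hinj : Function.Injective (algebraMap R L) :=
    IsLocalization.injective L m.primeCompl_le_nonZeroDivisors
  have hdom : IsDomain L := IsLocalization.isDomain_of_le_nonZeroDivisors (M := m.primeCompl) L
    m.primeCompl_le_nonZeroDivisors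
  rw [isRegularLocal_iff_isRegularLocalRing]
  trans IsRegularLocalRing (L ⧸ Ideal.span {algebraMap R L x})
  · exact ⟨fun h => h.of_ringEquiv e', fun h => h.of_ringEquiv e'.symm⟩
  rw [isRegularLocalRing_quotient_span_singleton_iff
    ((IsLocalization.AtPrime.to_map_mem_maximal_iff L m x).mpr hxm)
    (mem_nonZeroDivisors_of_ne_zero ((map_ne_zero_iff _ hinj).mpr hx0)),
    ← Localization.AtPrime.map_eq_maximalIdeal, ← Ideal.map_pow,
    IsLocalization.algebraMap_mem_map_algebraMap_iff m.primeCompl]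
  simp only [not_exists, not_and]
  rfl

end RegularLocal

section Determinant

/-- A determinant with two distinct rows in `m` lies in `m ^ 2`. -/
lemma det_mem_sq_of_two_rows {n R : Type*} [Fintype n] [DecidableEq n] [CommRing R] (m : Ideal R)
    (M : Matrix n n R) {i j : n} (hij : i ≠ j) (hi : ∀ k, M i k ∈ m) (hj : ∀ k, M j k ∈ m) :
    M.det ∈ m ^ 2 := by
  rw [← Matrix.det_transpose, Matrix.det_apply]
  refine sum_mem fun σ _ => ?_
  rw [Units.smul_def, zsmul_eq_mul]
  refine Ideal.mul_mem_left _ _ ?_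
  rw [← Finset.mul_prod_erase _ _ (Finset.mem_univ i), ← Finset.mul_prod_erase _ _
    (Finset.mem_erase.mpr ⟨hij.symm, Finset.mem_univ j⟩), ← mul_assoc, pow_two]
  exact Ideal.mul_mem_right _ _ (Ideal.mul_mem_mul (hi _) (hj _))

/-- A determinant lies in `m ^ 2` as soon as two independent linear combinations of its rows
have all their entries in `m`. -/
lemma det_mem_sq {n R : Type*} [Fintype n] [DecidableEq n] [CommRing R] (m : Ideal R)
    (M : Matrix n n R) (u v : n → R) {i j : n} (hij : i ≠ j)
    (hui : u i = 1) (huj : u j = 0) (hvj : v j = 1)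
    (hu : ∀ k, ∑ l, u l * M l k ∈ m) (hv : ∀ k, ∑ l, v l * M l k ∈ m) :
    M.det ∈ m ^ 2 := by
  set A := M.updateRow j (∑ k, v k • M k) with hA
  have hdA : A.det = M.det := by rw [hA, Matrix.det_updateRow_sum, hvj, one_smul]
  have hsum : ∑ k, u k • A k = ∑ k, u k • M k := by
    refine Finset.sum_congr rfl fun k _ => ?_
    by_cases hk : k = j
    · rw [hk, huj, zero_smul, zero_smul]
    · rw [hA, Matrix.updateRow_ne hk]
  rw [← hdA, ← one_smul R A.det, ← hui, ← Matrix.det_updateRow_sum]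
  refine det_mem_sq_of_two_rows m _ hij (fun k => ?_) (fun k => ?_)
  · rw [Matrix.updateRow_self, hsum]
    simpa using hu k
  · rw [Matrix.updateRow_ne hij.symm, hA, Matrix.updateRow_self]
    simpa using hv k

end Determinant

section Discriminant

variable {K : Type} [Field K] {p q : ℕ}

lemma genDelta_eq_det {ι : Type*} [Fintype ι] [DecidableEq ι]
    (b : Module.Basis ι (coefRing K p q)
      (genRing K p q ⧸ jacIdeal (fun i : idxSet p q => (X i : coefRing K p q)))) :
    genDelta K p q = (Algebra.leftMulMatrix b (Ideal.Quotient.mk _ (genF K p q))).det := by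
  rw [Algebra.leftMulMatrix_apply, LinearMap.det_toMatrix]
  rfl

lemma isUnit_natCast [CharZero K] {A : Type*} [CommRing A] [Algebra K A] {n : ℕ} (hn : 0 < n) :
    IsUnit (n : A) := by
  rw [← map_natCast (algebraMap K A)]
  exact (IsUnit.mk0 _ (Nat.cast_ne_zero.mpr hn.ne')).map _

/-- The image of the discriminant under a specialization of the coefficients is the determinant
of multiplication by the specialized polynomial. -/
lemma map_genDelta [CharZero K] (hp : 0 < p) (hq : 0 < q) {T : Type} [CommRing T]
    (φ : coefRing K p q →+* T) {J : Ideal (MvPolynomial (Fin 2) T)}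
    (hJ : jacIdeal (fun i : idxSet p q => φ (X i)) ≤ J)
    (b : Module.Basis (Fin (q - 1) × Fin (p - 1)) T (MvPolynomial (Fin 2) T ⧸ J))
    (hb : ∀ i, b i = Ideal.Quotient.mk _ (X 0 ^ (i.1 : ℕ) * X 1 ^ (i.2 : ℕ))) :
    φ (genDelta K p q) = (Algebra.leftMulMatrix b
      (Ideal.Quotient.mk J (wPoly T p q fun i => φ (X i)))).det := by
  obtain ⟨b₀, hb₀⟩ := exists_basis_quotient_jacIdeal hp hq (isUnit_natCast (K := K) hp)
    (isUnit_natCast (K := K) hq) (fun i : idxSet p q => (X i : coefRing K p q))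
  have h := leftMulMatrix_quotient_baseChange φ (J' := J) ((map_jacIdeal φ _).le.trans hJ) _ b₀ hb₀
    b (fun i => by simp [hb]) (wPoly (coefRing K p q) p q fun i => X i)
  rw [genDelta_eq_det b₀, RingHom.map_det, RingHom.mapMatrix_apply]
  rw [map_wPoly] at h
  exact congrArg Matrix.det h.symm

lemma zero_mem_idxSet (hp : 0 < p) (hq : 0 < q) : ((0, 0) : ℕ × ℕ) ∈ idxSet p q := by
  simp [idxSet, hp, hq]

/-- The ring homomorphism restricting functions on the parameter space to the line through `a`
along which the constant coefficient varies. -/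
noncomputable def lineHom (a : idxSet p q → K) : coefRing K p q →+* Polynomial K :=
  eval₂Hom Polynomial.C fun i => Polynomial.C (a i) + if (i : ℕ × ℕ) = (0, 0) then .X else 0

lemma eval_zero_lineHom (a : idxSet p q → K) (s : coefRing K p q) :
    (lineHom a s).eval 0 = eval a s := by
  have : (Polynomial.evalRingHom (0 : K)).comp (lineHom a) = eval a := by
    ext i
    · simp [lineHom]
    · by_cases h : (i : ℕ × ℕ) = (0, 0) <;> simp [lineHom, h]
  exact DFunLike.congr_fun this s

lemma wPoly_lineHom (hp : 0 < p) (hq : 0 < q) (a : idxSet p q → K) :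
    wPoly (Polynomial K) p q (fun i => lineHom a (X i)) =
      MvPolynomial.map Polynomial.C (wPoly K p q a) + C Polynomial.X := by
  rw [map_wPoly]
  simp only [wPoly, lineHom, coe_eval₂Hom, eval₂_X, C_add, add_mul, Finset.sum_add_distrib,
    Function.comp_apply, ← add_assoc]
  congr 1
  rw [Finset.sum_eq_single ⟨(0, 0), zero_mem_idxSet hp hq⟩]
  · simp
  · intro i _ hi
    rw [if_neg (fun h => hi (Subtype.ext h)), C_0, zero_mul, zero_mul]
  · simp

/-- Along a line on which the constant coefficient varies, the discriminant is a characteristic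
polynomial. -/
lemma lineHom_genDelta [CharZero K] (hp : 0 < p) (hq : 0 < q) (a : idxSet p q → K)
    (b : Module.Basis (Fin (q - 1) × Fin (p - 1)) K (MvPolynomial (Fin 2) K ⧸ jacIdeal a))
    (hb : ∀ i, b i = Ideal.Quotient.mk _ (X 0 ^ (i.1 : ℕ) * X 1 ^ (i.2 : ℕ))) :
    lineHom a (genDelta K p q) =
      (Algebra.leftMulMatrix b (Ideal.Quotient.mk _ (-wPoly K p q a))).charpoly := by
  obtain ⟨b', hb'⟩ := exists_basis_quotient_jacIdeal hp hq
    (isUnit_natCast (K := K) (A := Polynomial K) hp) (isUnit_natCast (K := K) hq)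
    (Polynomial.C ∘ a)
  have hJ : jacIdeal (fun i : idxSet p q => lineHom a (X i)) ≤ jacIdeal (Polynomial.C ∘ a) := by
    rw [jacIdeal, jacIdeal, wPoly_lineHom hp hq, map_wPoly, map_add, map_add, pderiv_C, pderiv_C,
      add_zero, add_zero]
  rw [map_genDelta hp hq _ hJ b' hb', wPoly_lineHom hp hq, Matrix.charpoly, Matrix.charmatrix,
    map_add, map_add,
    leftMulMatrix_quotient_baseChange Polynomial.C (map_jacIdeal Polynomial.C a).le _ b hb b'
      (fun i => by simp [hb']), map_neg, map_neg, map_neg, sub_neg_eq_add, add_comm]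
  congr 2
  exact (Algebra.leftMulMatrix b').commutes Polynomial.X

lemma genDelta_ne_zero [CharZero K] (hp : 0 < p) (hq : 0 < q) : genDelta K p q ≠ 0 := by
  intro h
  obtain ⟨b, hb⟩ := exists_basis_quotient_jacIdeal hp hq (isUnit_natCast (K := K) hp)
    (isUnit_natCast (K := K) hq) (fun _ : idxSet p q => (0 : K))
  have := lineHom_genDelta hp hq _ b hb
  rw [h, map_zero] at this
  exact (Matrix.charpoly_monic _).ne_zero this.symm

/-- Evaluation at a singular point, as a homomorphism on the Jacobian algebra. -/
noncomputable def evalJac {a : idxSet p q → K} {Q : K × K} (hQ : IsSingAt K (wPoly K p q a) Q) :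
    MvPolynomial (Fin 2) K ⧸ jacIdeal a →ₐ[K] K :=
  Ideal.Quotient.liftₐ (jacIdeal a) (aeval ![Q.1, Q.2]) fun x hx => by
    have hle : jacIdeal a ≤ RingHom.ker (eval ![Q.1, Q.2]) := by
      rw [jacIdeal, Ideal.span_le, Set.insert_subset_iff, Set.singleton_subset_iff]
      exact ⟨hQ.2.1, hQ.2.2⟩
    simpa [aeval_eq_eval] using hle hx

lemma evalJac_mk {a : idxSet p q → K} {Q : K × K} (hQ : IsSingAt K (wPoly K p q a) Q)
    (G : MvPolynomial (Fin 2) K) :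
    evalJac hQ (Ideal.Quotient.mk _ G) = eval ![Q.1, Q.2] G := by
  simp [evalJac]

lemma genDelta_mem_sq [CharZero K] (hp : 0 < p) (hq : 0 < q) {a : idxSet p q → K} {Q Q' : K × K}
    (hQ : IsSingAt K (wPoly K p q a) Q) (hQ' : IsSingAt K (wPoly K p q a) Q') (hne : Q ≠ Q') :
    genDelta K p q ∈ ptMaxIdeal K p q a ^ 2 := by
  obtain ⟨b, hb⟩ := exists_basis_quotient_jacIdeal hp hq (isUnit_natCast (K := K) hp)
    (isUnit_natCast (K := K) hq) a
  obtain ⟨b₀, hb₀⟩ := exists_basis_quotient_jacIdeal hp hq (isUnit_natCast (K := K) hp)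
    (isUnit_natCast (K := K) hq) (fun i : idxSet p q => (X i : coefRing K p q))
  have hcomp : (eval a : coefRing K p q →+* K) ∘ (fun i : idxSet p q => X i) = a := by
    ext i; simp
  have hmat := leftMulMatrix_quotient_baseChange (eval a : coefRing K p q →+* K)
    (J := jacIdeal (fun i : idxSet p q => (X i : coefRing K p q))) (J' := jacIdeal a)
    (by rw [map_jacIdeal, hcomp]) _ b₀ hb₀ b (fun i => by simp [hb])
    (wPoly (coefRing K p q) p q fun i => X i)
  rw [map_wPoly, hcomp] at hmat
  rw [genDelta_eq_det b₀]
  set M := Algebra.leftMulMatrix b₀ (Ideal.Quotient.mk _ (genF K p q)) with hM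
  replace hmat : Algebra.leftMulMatrix b (Ideal.Quotient.mk _ (wPoly K p q a)) = M.map (eval a) :=
    hmat
  have hrow : ∀ {P : K × K} (hP : IsSingAt K (wPoly K p q a) P) k,
      ∑ l, evalJac hP (b l) * eval a (M l k) = 0 := by
    intro P hP k
    have h1 := congrArg (evalJac hP)
      (b.sum_repr (Ideal.Quotient.mk _ (wPoly K p q a) * b k))
    rw [map_mul (evalJac hP), evalJac_mk, hP.1, zero_mul, map_sum] at h1
    rw [← h1]
    refine Finset.sum_congr rfl fun l _ => ?_
    rw [map_smul, smul_eq_mul, mul_comm, ← Algebra.leftMulMatrix_eq_repr_mul, hmat]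
    rfl
  obtain ⟨i, j, hij⟩ : ∃ i j, evalJac hQ (b i) * evalJac hQ' (b j) -
      evalJac hQ (b j) * evalJac hQ' (b i) ≠ 0 := by
    by_contra! hcon
    have h1 : ∀ f j, evalJac hQ f * evalJac hQ' (b j) = evalJac hQ (b j) * evalJac hQ' f := by
      intro f j
      have : evalJac hQ' (b j) • (evalJac hQ).toLinearMap =
          evalJac hQ (b j) • (evalJac hQ').toLinearMap :=
        b.ext fun i => by simpa [mul_comm, mul_left_comm] using sub_eq_zero.mp (hcon i j)
      simpa [mul_comm] using DFunLike.congr_fun this f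
    have h2 : ∀ f, evalJac hQ f = evalJac hQ' f := by
      intro f
      have : (evalJac hQ').toLinearMap = (evalJac hQ).toLinearMap :=
        b.ext fun i => by simpa using h1 1 i
      exact (DFunLike.congr_fun this f).symm
    apply hne
    ext
    · simpa [evalJac_mk] using h2 (Ideal.Quotient.mk _ (X 0))
    · simpa [evalJac_mk] using h2 (Ideal.Quotient.mk _ (X 1))
  set D := evalJac hQ (b i) * evalJac hQ' (b j) - evalJac hQ (b j) * evalJac hQ' (b i) with hD
  have hne' : i ≠ j := by rintro rfl; exact hij (sub_self _)
  have hmem : ∀ (c c' : K) k, ∑ l, (C (D⁻¹ * (c * evalJac hQ (b l) + c' * evalJac hQ' (b l))) :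
      coefRing K p q) * M l k ∈ ptMaxIdeal K p q a := by
    intro c c' k
    rw [ptMaxIdeal, RingHom.mem_ker, map_sum]
    have h1 := hrow hQ k
    have h2 := hrow hQ' k
    calc _ = D⁻¹ * (c * ∑ l, evalJac hQ (b l) * eval a (M l k) +
          c' * ∑ l, evalJac hQ' (b l) * eval a (M l k)) := by
          simp only [Finset.mul_sum, ← Finset.sum_add_distrib, map_mul, eval_C]
          exact Finset.sum_congr rfl fun l _ => by ring
      _ = 0 := by rw [h1, h2]; ring
  refine det_mem_sq _ M _ _ hne' ?_ ?_ ?_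
    (hmem (evalJac hQ' (b j)) (-evalJac hQ (b j)))
    (hmem (-evalJac hQ' (b i)) (evalJac hQ (b i)))
  · rw [← C_1, ← inv_mul_cancel₀ hij, hD]; congr 2; ring
  · rw [← C_0]; congr 1; ring
  · rw [← C_1, ← inv_mul_cancel₀ hij, hD]; congr 2; ring

end Discriminant

section Taylor

variable {σ K : Type*} [Field K]

lemma pderiv_comm {R : Type*} [CommRing R] (i j : σ) (G : MvPolynomial σ R) :
    pderiv i (pderiv j G) = pderiv j (pderiv i G) := by
  classical
  have : ⁅(pderiv i : Derivation R (MvPolynomial σ R) (MvPolynomial σ R)),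
      (pderiv j : Derivation R (MvPolynomial σ R) (MvPolynomial σ R))⁆ = 0 := by
    refine derivation_ext fun k => ?_
    by_cases hi : k = i <;> by_cases hj : k = j <;>
      simp [Derivation.commutator_apply, pderiv_X, Pi.single_apply, hi, hj] <;> aesop
  have h := DFunLike.congr_fun this G
  rwa [Derivation.commutator_apply, Derivation.zero_apply, sub_eq_zero] at h

lemma X_sub_C_mem_ker_eval (P : σ → K) (i : σ) : X i - C (P i) ∈ RingHom.ker (eval P) := by
  simp [RingHom.mem_ker]

/-- First order Taylor expansion at `P`. -/
lemma taylor_mem_sq [Fintype σ] (P : σ → K) (G : MvPolynomial σ K) :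
    G - C (eval P G) - ∑ i, C (eval P (pderiv i G)) * (X i - C (P i)) ∈
      RingHom.ker (eval P) ^ 2 := by
  classical
  induction G using MvPolynomial.induction_on with
  | C c => simp
  | add f g hf hg =>
    convert add_mem hf hg using 1
    simp only [map_add, add_mul, Finset.sum_add_distrib]
    ring
  | mul_X f n hf =>
    have hS : ∑ i, C (eval P (pderiv i f)) * (X i - C (P i)) ∈ RingHom.ker (eval P) :=
      sum_mem fun i _ => Ideal.mul_mem_left _ _ (X_sub_C_mem_ker_eval P i)
    have h2 := Ideal.mul_mem_mul hS (X_sub_C_mem_ker_eval P n)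
    rw [← pow_two] at h2
    convert add_mem (Ideal.mul_mem_right (X n) _ hf) h2 using 1
    have hsum : ∑ i, C (eval P (pderiv i (f * X n))) * (X i - C (P i)) =
        C (eval P f) * (X n - C (P n)) +
          C (P n) * ∑ i, C (eval P (pderiv i f)) * (X i - C (P i)) := by
      rw [Finset.mul_sum]
      have : C (eval P f) * (X n - C (P n)) =
          ∑ i, if i = n then C (eval P f) * (X n - C (P n)) else 0 := by simp
      rw [this, ← Finset.sum_add_distrib]
      refine Finset.sum_congr rfl fun i _ => ?_
      rw [pderiv_mul, pderiv_X]
      by_cases h : i = n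
      · subst h
        simp
        ring
      · simp [h, Ne.symm h]
        ring
    rw [hsum]
    simp only [map_mul, eval_X]
    ring

lemma ker_eval_le_sup_sq [Fintype σ] {P : σ → K} {J : Ideal (MvPolynomial σ K)}
    (h : ∀ i, X i - C (P i) ∈ J ⊔ RingHom.ker (eval P) ^ 2) :
    RingHom.ker (eval P) ≤ J ⊔ RingHom.ker (eval P) ^ 2 := by
  intro G hG
  have h1 := Ideal.mem_sup_right (S := J) (taylor_mem_sq P G)
  rw [(RingHom.mem_ker).mp hG, C_0, sub_zero] at h1
  exact (Submodule.sub_mem_iff_left _ (sum_mem fun i _ => Ideal.mul_mem_left _ _ (h i))).mp h1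

lemma le_of_le_sup_sq_of_pow_le {R : Type*} [CommRing R] {J m : Ideal R} (h : m ≤ J ⊔ m ^ 2)
    {k : ℕ} (hk : m ^ k ≤ J) : m ≤ J := by
  have key : ∀ n : ℕ, m ≤ J ⊔ m ^ (n + 1) := by
    intro n
    induction n with
    | zero => rw [zero_add, pow_one]; exact le_sup_right
    | succ n ih =>
      refine ih.trans (sup_le le_sup_left ?_)
      calc m ^ (n + 1) = m ^ n * m := pow_succ _ _
        _ ≤ m ^ n * (J ⊔ m ^ 2) := Ideal.mul_mono_right h
        _ = m ^ n * J ⊔ m ^ (n + 2) := by rw [Ideal.mul_sup, ← pow_add]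
        _ ≤ J ⊔ m ^ (n + 1 + 1) := sup_le_sup Ideal.mul_le_right le_rfl
  refine (key k).trans (sup_le le_rfl ((Ideal.pow_le_pow_right (Nat.le_succ k)).trans hk))

end Taylor

section Node

variable {K : Type} [Field K] {G : MvPolynomial (Fin 2) K} {P : K × K}

lemma mem_sq_of_isSingAt (h : IsSingAt K G P) : G ∈ RingHom.ker (eval ![P.1, P.2]) ^ 2 := by
  have := taylor_mem_sq ![P.1, P.2] G
  rw [Fin.sum_univ_two, h.1, h.2.1, h.2.2] at this
  simpa using this

/-- At a node, the partial derivatives generate the maximal ideal modulo its square. -/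
lemma ker_eval_le_of_isNodeAt (h : IsNodeAt K G P) {J : Ideal (MvPolynomial (Fin 2) K)}
    (h0 : pderiv 0 G ∈ J) (h1 : pderiv 1 G ∈ J) :
    RingHom.ker (eval ![P.1, P.2]) ≤ J ⊔ RingHom.ker (eval ![P.1, P.2]) ^ 2 := by
  set m := RingHom.ker (eval ![P.1, P.2]) with hm
  have t0 := taylor_mem_sq ![P.1, P.2] (pderiv 0 G)
  have t1 := taylor_mem_sq ![P.1, P.2] (pderiv 1 G)
  rw [Fin.sum_univ_two, h.1.2.1, C_0, sub_zero, ← hm, pderiv_comm 1 0] at t0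
  rw [Fin.sum_univ_two, h.1.2.2, C_0, sub_zero, ← hm] at t1
  have hD := h.2
  simp only [hessPoly, map_sub, map_mul, map_pow] at hD
  set A := eval ![P.1, P.2] (pderiv 0 (pderiv 0 G))
  set B := eval ![P.1, P.2] (pderiv 0 (pderiv 1 G))
  set D := eval ![P.1, P.2] (pderiv 1 (pderiv 1 G))
  set x := (X 0 - C (![P.1, P.2] 0) : MvPolynomial (Fin 2) K)
  set y := (X 1 - C (![P.1, P.2] 1) : MvPolynomial (Fin 2) K)
  have l0 : C A * x + C B * y ∈ J ⊔ m ^ 2 := by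
    simpa using sub_mem (Ideal.mem_sup_left h0) (Ideal.mem_sup_right (S := J) t0)
  have l1 : C B * x + C D * y ∈ J ⊔ m ^ 2 := by
    simpa using sub_mem (Ideal.mem_sup_left h1) (Ideal.mem_sup_right (S := J) t1)
  have hu : IsUnit (C (A * D - B ^ 2) : MvPolynomial (Fin 2) K) := (IsUnit.mk0 _ hD).map C
  refine ker_eval_le_sup_sq (Fin.forall_fin_two.mpr ⟨?_, ?_⟩)
  · refine (Ideal.unit_mul_mem_iff_mem _ hu).mp ?_
    convert sub_mem (Ideal.mul_mem_left _ (C D) l0) (Ideal.mul_mem_left _ (C B) l1) using 1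
    simp only [map_sub, map_mul, map_pow]
    ring
  · refine (Ideal.unit_mul_mem_iff_mem _ hu).mp ?_
    convert sub_mem (Ideal.mul_mem_left _ (C A) l1) (Ideal.mul_mem_left _ (C B) l0) using 1
    simp only [map_sub, map_mul, map_pow]
    ring

/-- If a node is the only singular point, then the ideal of the singular locus is the maximal
ideal of that point. -/
lemma ker_eval_le_of_unique [IsAlgClosed K] (h : IsNodeAt K G P)
    (huniq : ∀ Q, IsSingAt K G Q → Q = P) {J : Ideal (MvPolynomial (Fin 2) K)}
    (hG : G ∈ J) (h0 : pderiv 0 G ∈ J) (h1 : pderiv 1 G ∈ J) :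
    RingHom.ker (eval ![P.1, P.2]) ≤ J := by
  have hrad : RingHom.ker (eval ![P.1, P.2]) ≤ J.radical := by
    rw [← vanishingIdeal_zeroLocus_eq_radical (K := K)]
    intro f hf
    rw [mem_vanishingIdeal_iff]
    intro z hz
    rw [mem_zeroLocus_iff] at hz
    have hz' : ![z 0, z 1] = z := by ext i; fin_cases i <;> rfl
    have hs : IsSingAt K G (z 0, z 1) := by
      refine ⟨?_, ?_, ?_⟩
      · simpa [hz', aeval_eq_eval] using hz _ hG
      · simpa [hz', aeval_eq_eval] using hz _ h0
      · simpa [hz', aeval_eq_eval] using hz _ h1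
    have hP := huniq _ hs
    rw [← hP] at hf
    simpa [hz', aeval_eq_eval] using hf
  obtain ⟨k, hk⟩ := Ideal.exists_pow_le_of_le_radical_of_fg hrad (Ideal.fg_of_isNoetherianRing _)
  exact le_of_le_sup_sq_of_pow_le (ker_eval_le_of_isNodeAt h h0 h1) hk

end Node

section Multiplicity

variable {K N : Type*} [Field K] [CommRing N] [Algebra K N] [Module.Finite K N]

/-- If `f` generates a maximal ideal of residue field `K` and `f` is divisible by its square,
then `0` is a simple root of the characteristic polynomial of multiplication by `f`. -/
lemma rootMultiplicity_charpoly_lmul (ε : N →ₐ[K] K) (f : N) (hker : ∀ x, ε x = 0 ↔ f ∣ x)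
    (hf : f ^ 2 ∣ f) : (Algebra.lmul K N f).charpoly.rootMultiplicity 0 = 1 := by
  have hpow : ∀ k : ℕ, f ^ (k + 1) ∣ f := by
    intro k
    induction k with
    | zero => simp
    | succ k ih =>
      refine dvd_trans ?_ hf
      rw [pow_succ, pow_two]
      exact mul_dvd_mul ih dvd_rfl
  have hgen : (Algebra.lmul K N f).maxGenEigenspace 0 = LinearMap.ker (Algebra.lmul K N f) := by
    ext x
    have hlmul : ∀ k : ℕ, (Algebra.lmul K N f ^ k) x = f ^ k * x := fun k => by
      rw [← map_pow]; rfl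
    simp only [Module.End.mem_maxGenEigenspace, zero_smul, sub_zero, LinearMap.mem_ker, hlmul]
    change _ ↔ f * x = 0
    constructor
    · rintro ⟨k, hk⟩
      obtain ⟨g, hg⟩ := hpow k
      rw [hg, pow_succ]
      linear_combination f * g * hk
    · intro hx
      exact ⟨1, by rwa [pow_one]⟩
  have hrange : LinearMap.range (Algebra.lmul K N f) = LinearMap.ker ε.toLinearMap := by
    ext x
    rw [LinearMap.mem_range, LinearMap.mem_ker, AlgHom.toLinearMap_apply, hker]
    exact ⟨fun ⟨y, hy⟩ => ⟨y, hy.symm⟩, fun ⟨y, hy⟩ => ⟨y, hy.symm⟩⟩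
  have hsurj : LinearMap.range ε.toLinearMap = ⊤ := by
    rw [LinearMap.range_eq_top]
    exact fun c => ⟨algebraMap K N c, by simp⟩
  rw [← LinearMap.finrank_maxGenEigenspace_eq, hgen]
  have h1 := (Algebra.lmul K N f).finrank_range_add_finrank_ker
  have h2 := ε.toLinearMap.finrank_range_add_finrank_ker
  rw [hsurj, finrank_top, Module.finrank_self] at h2
  rw [hrange] at h1
  omega

end Multiplicity

section Main

variable {K : Type} [Field K] [IsAlgClosed K] [CharZero K] {p q : ℕ}

lemma mul_genDelta_notMem_sq (hp : 0 < p) (hq : 0 < q) {a : idxSet p q → K} {P : K × K}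
    (hP : IsNodeAt K (wPoly K p q a) P) (huniq : ∀ Q, IsSingAt K (wPoly K p q a) Q → Q = P)
    {s : coefRing K p q} (hs : s ∉ ptMaxIdeal K p q a) :
    s * genDelta K p q ∉ ptMaxIdeal K p q a ^ 2 := by
  intro hmem
  obtain ⟨b, hb⟩ := exists_basis_quotient_jacIdeal hp hq (isUnit_natCast (K := K) hp)
    (isUnit_natCast (K := K) hq) a
  have : Module.Finite K (MvPolynomial (Fin 2) K ⧸ jacIdeal a) := .of_basis b
  have hle : ptMaxIdeal K p q a ≤ (Ideal.span {Polynomial.X}).comap (lineHom a) := by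
    intro r hr
    rw [Ideal.mem_comap, Ideal.mem_span_singleton, Polynomial.X_dvd_iff,
      Polynomial.coeff_zero_eq_eval_zero, eval_zero_lineHom]
    exact hr
  have hdvd : (Polynomial.X : Polynomial K) ^ 2 ∣ lineHom a (genDelta K p q) := by
    have h1 := (Ideal.pow_right_mono hle 2).trans (Ideal.le_comap_pow _ 2) hmem
    rw [Ideal.mem_comap, Ideal.span_singleton_pow, Ideal.mem_span_singleton, map_mul] at h1
    refine IsCoprime.dvd_of_dvd_mul_left (IsCoprime.pow_left ?_) h1
    refine (Polynomial.irreducible_X.coprime_iff_not_dvd).mpr fun h => hs ?_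
    rwa [Polynomial.X_dvd_iff, Polynomial.coeff_zero_eq_eval_zero, eval_zero_lineHom] at h
  have hm : RingHom.ker (eval ![P.1, P.2]) ≤ jacIdeal a ⊔ Ideal.span {-wPoly K p q a} :=
    ker_eval_le_of_unique hP huniq
      (Ideal.mem_sup_right (Ideal.mem_span_singleton.mpr (neg_dvd.mpr dvd_rfl)))
      (Ideal.mem_sup_left (Ideal.subset_span (by simp)))
      (Ideal.mem_sup_left (Ideal.subset_span (by simp)))
  set f := Ideal.Quotient.mk (jacIdeal a) (-wPoly K p q a) with hf
  have hmap : (RingHom.ker (eval ![P.1, P.2])).map (Ideal.Quotient.mk (jacIdeal a)) ≤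
      Ideal.span {f} := by
    refine (Ideal.map_mono hm).trans ?_
    rw [Ideal.map_sup, Ideal.map_quotient_self, bot_sup_eq, Ideal.map_span, Set.image_singleton]
  have hroot := rootMultiplicity_charpoly_lmul (evalJac hP.1) f (fun x => ?_) ?_
  · rw [lineHom_genDelta hp hq a b hb, Algebra.leftMulMatrix_apply, LinearMap.charpoly_toMatrix]
      at hdvd
    have h2 := (Polynomial.le_rootMultiplicity_iff (LinearMap.charpoly_monic
      (Algebra.lmul K (MvPolynomial (Fin 2) K ⧸ jacIdeal a) f)).ne_zero (a := 0) (n := 2)).mpr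
      (by rwa [map_zero, sub_zero])
    omega
  · constructor
    · obtain ⟨x, rfl⟩ := Ideal.Quotient.mk_surjective x
      rw [evalJac_mk]
      intro hx
      exact Ideal.mem_span_singleton.mp (hmap (Ideal.mem_map_of_mem _ hx))
    · rintro ⟨y, rfl⟩
      rw [map_mul, hf, evalJac_mk, map_neg, hP.1.1, neg_zero, zero_mul]
  · rw [← Ideal.mem_span_singleton, ← Ideal.span_singleton_pow]
    refine Ideal.pow_right_mono hmap 2 ?_
    rw [← Ideal.map_pow]
    exact Ideal.mem_map_of_mem _ (neg_mem (mem_sq_of_isSingAt hP.1))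

end Main

/-- Let `C_a` be a nodal curve with at least one node. Then the localization of `R/(Δ)` at
the maximal ideal `m_a` corresponding to `a` is a regular local ring iff `C_a` has exactly
one node. -/
theorem localization_of_hypersurface_regular_iff_one_node
    (K : Type) [Field K] [IsAlgClosed K] [CharZero K]
    (p q : ℕ) (hp : 1 < p) (hpq : p < q) (hco : Nat.Coprime p q)
    (a : idxSet p q → K)
    (hnodal : ∀ Q : K × K, IsSingAt K (wPoly K p q a) Q → IsNodeAt K (wPoly K p q a) Q)
    (hex : ∃ Q : K × K, IsNodeAt K (wPoly K p q a) Q)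
    (hmax : (ptMaxIdealBar K p q a).IsMaximal) :
    IsRegularLocal (Localization.AtPrime (ptMaxIdealBar K p q a) (hp := hmax.isPrime)) ↔
      (∃! Q : K × K, IsNodeAt K (wPoly K p q a) Q) := by
  have hp0 : 0 < p := by omega
  have hq0 : 0 < q := by omega
  have hm : (ptMaxIdeal K p q a).IsMaximal :=
    RingHom.ker_isMaximal_of_surjective _ fun c => ⟨C c, eval_C c⟩
  refine (isRegularLocal_localization_quotient_iff (ptMaxIdeal K p q a)
    (genDelta_ne_zero hp0 hq0) hmax).trans ⟨fun h => ?_, ?_⟩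
  · obtain ⟨Q, hQ⟩ := hex
    refine ⟨Q, hQ, fun Q' hQ' => ?_⟩
    by_contra hne
    refine h 1 ((Ideal.ne_top_iff_one _).mp hm.ne_top) ?_
    rw [one_mul]
    exact genDelta_mem_sq hp0 hq0 hQ'.1 hQ.1 hne
  · rintro ⟨Q, hQ, huniq⟩ s hs
    exact mul_genDelta_notMem_sq hp0 hq0 hQ (fun Q' hQ' => huniq Q' (hnodal Q' hQ')) hs
end

section
/- Let α ∈ K^I be such that C_α is a nodal curve with l ≥ 1 pairwise distinct nodes (ξ_1,η_1),…,(ξ_l,η_l). Then the l vectors v_i = (ξ_i^ν η_i^μ)_{(ν,μ)∈I} ∈ K^I, i = 1,…,l, are linearly independent over K; equivalently, the l×n matrix (ξ_i^ν η_i^μ) with rows indexed by i = 1,…,l and columns indexed by (ν,μ) ∈ I has rank l. -/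
open MvPolynomial

namespace Polynomial.NodeVectors

open scoped Polynomial.Bivariate

variable {K : Type*} [Field K]

/-- Every monomial `X ^ i * Y ^ j` of `G` has weight `p * i + q * j` at most `d`. -/
def WeightLE (p q : ℕ) (d : ℤ) (G : K[X][Y]) : Prop :=
  ∀ i j, (G.coeff j).coeff i ≠ 0 → (p * i + q * j : ℤ) ≤ d

theorem WeightLE.sub {p q : ℕ} {d : ℤ} {G H : K[X][Y]} (hG : WeightLE p q d G)
    (hH : WeightLE p q d H) : WeightLE p q d (G - H) := by
  intro i j hij
  rw [coeff_sub, coeff_sub] at hij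
  by_cases h : (G.coeff j).coeff i = 0
  · exact hH i j fun h' => hij (by rw [h, h', sub_zero])
  · exact hG i j h

theorem WeightLE.mul {p q : ℕ} {d e : ℤ} {G H : K[X][Y]} (hG : WeightLE p q d G)
    (hH : WeightLE p q e H) : WeightLE p q (d + e) (G * H) := by
  intro i j hij
  rw [coeff_mul, finsetSum_coeff] at hij
  obtain ⟨⟨j₁, j₂⟩, hj, hne⟩ := Finset.exists_ne_zero_of_sum_ne_zero hij
  rw [coeff_mul] at hne
  obtain ⟨⟨i₁, i₂⟩, hi, hne'⟩ := Finset.exists_ne_zero_of_sum_ne_zero hne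
  have h₁ := hG i₁ j₁ (left_ne_zero_of_mul hne')
  have h₂ := hH i₂ j₂ (right_ne_zero_of_mul hne')
  rw [Finset.HasAntidiagonal.mem_antidiagonal] at hi hj
  simp only at hi hj
  subst hi hj
  push_cast
  linarith

theorem WeightLE.pow {p q : ℕ} {d : ℤ} {G : K[X][Y]} (hG : WeightLE p q d G) (n : ℕ) :
    WeightLE p q (n * d) (G ^ n) := by
  induction n with
  | zero =>
    intro i j hij
    rw [pow_zero, coeff_one] at hij
    split_ifs at hij with h
    · rw [coeff_one] at hij
      split_ifs at hij with h'
      · simp [h, h']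
      · exact absurd rfl hij
    · exact absurd (coeff_zero i) hij
  | succ n ih =>
    rw [pow_succ]
    convert ih.mul hG using 1
    push_cast
    ring

theorem WeightLE.C_of_natDegree_le {p q N : ℕ} {D : K[X]} (hD : D.natDegree ≤ N) :
    WeightLE p q (p * N) (C D) := by
  intro i j hij
  rw [coeff_C] at hij
  split_ifs at hij with h
  · have : i ≤ N := (le_natDegree_of_ne_zero hij).trans hD
    subst h
    push_cast
    have : (p * i : ℤ) ≤ p * N := by gcongr
    linarith
  · exact absurd (coeff_zero i) hij

/-- Division by a monic polynomial of weight `p * q` and degree `p` in `Y` does not raise the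
weight of the remainder. -/
theorem WeightLE.modByMonic {p q : ℕ} {d : ℤ} {f G : K[X][Y]} (hG : WeightLE p q d G) (hf : f.Monic)
    (hdeg : f.natDegree = p) (hp : 0 < p) (hW : WeightLE p q (p * q) f) :
    WeightLE p q d (G %ₘ f) := by
  induction hm : G.natDegree using Nat.strong_induction_on generalizing G with
  | _ m ih =>
  by_cases hlt : m < p
  · rwa [(modByMonic_eq_self_iff hf).2]
    exact degree_lt_degree (by omega)
  push Not at hlt
  set T : K[X][Y] := C G.leadingCoeff * X ^ (m - p) with hT
  have hTW : WeightLE p q (d - p * q) T := by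
    intro i j hij
    rw [hT, coeff_C_mul_X_pow] at hij
    split_ifs at hij with h
    · have := hG i m (by rwa [← hm])
      subst h
      push_cast [hlt]
      linarith
    · exact absurd (coeff_zero i) hij
  have hmul : (f * T) %ₘ f = 0 := (modByMonic_eq_zero_iff_dvd hf).2 ⟨T, rfl⟩
  have hEq : G %ₘ f = (G - f * T) %ₘ f := by rw [sub_modByMonic, hmul, sub_zero]
  have hG0 : G ≠ 0 := by
    rintro rfl
    rw [natDegree_zero] at hm
    omega
  have hWs : WeightLE p q d (G - f * T) := by
    refine hG.sub ?_
    convert hW.mul hTW using 1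
    ring
  have hlt' : (G - f * T).degree < G.degree := by
    have hle : f.degree ≤ G.degree := by
      rw [degree_eq_natDegree hf.ne_zero, degree_eq_natDegree hG0, hdeg, hm]
      exact_mod_cast hlt
    have := div_wf_lemma ⟨hle, hG0⟩ hf
    rw [hT, ← hm, ← hdeg]
    exact this
  rw [hEq]
  by_cases h0 : G - f * T = 0
  · rw [h0, zero_modByMonic]
    intro i j hij
    simp at hij
  · exact ih _ (by rw [← hm]; exact natDegree_lt_natDegree h0 hlt') hWs rfl

/-- A polynomial that is a nonzero multiple of a monic `D ∈ K[X]` has at least the weight of `D`. -/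
theorem eq_zero_of_weightLE_C_mul {p q : ℕ} {d : ℤ} {D : K[X]} (hD : D.Monic) {h : K[X][Y]}
    (hW : WeightLE p q d (C D * h)) (hd : d < p * D.natDegree) : h = 0 := by
  ext1 j
  rw [coeff_zero]
  by_contra hne
  have hlead := hW (D * h.coeff j).natDegree j
    (by rw [coeff_C_mul]; exact leadingCoeff_ne_zero.2 (mul_ne_zero hD.ne_zero hne))
  rw [natDegree_mul hD.ne_zero hne] at hlead
  push_cast at hlead
  nlinarith [mul_nonneg (Int.natCast_nonneg p) (Int.natCast_nonneg (h.coeff j).natDegree),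
    mul_nonneg (Int.natCast_nonneg q) (Int.natCast_nonneg j)]

/-- The ideal of the point `(x, y)`. -/
noncomputable def pointIdeal (P : K × K) : Ideal K[X][Y] :=
  RingHom.ker (evalEvalRingHom P.1 P.2)

theorem mem_pointIdeal {P : K × K} {G : K[X][Y]} : G ∈ pointIdeal P ↔ G.evalEval P.1 P.2 = 0 :=
  Iff.rfl

theorem exists_of_mem_pointIdeal {P : K × K} {G : K[X][Y]} (hG : G ∈ pointIdeal P) :
    ∃ A B : K[X][Y], G = C (X - C P.1) * A + (X - C (C P.2)) * B := by
  obtain ⟨r, hr⟩ : X - C P.1 ∣ G.eval (C P.2) := dvd_iff_isRoot.2 hG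
  refine ⟨C r, G /ₘ (X - C (C P.2)), ?_⟩
  rw [← C_mul, ← hr, ← modByMonic_X_sub_C_eq_C_eval, modByMonic_add_div]

/-- `P` is a singular point of the curve `f = 0`. -/
structure IsSingular (f : K[X][Y]) (P : K × K) : Prop where
  evalEval_eq_zero : f.evalEval P.1 P.2 = 0
  deriv_X : (derivative (f.eval (C P.2))).eval P.1 = 0
  deriv_Y : (derivative f).evalEval P.1 P.2 = 0

/-- The difference quotient of `f` in the direction of `Y`, at height `y`. -/
noncomputable def slope (f : K[X][Y]) (y : K) : K[X][Y] := f /ₘ (X - C (C y))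

theorem X_sub_C_mul_slope (f : K[X][Y]) (y : K) :
    (X - C (C y)) * slope f y = f - C (f.eval (C y)) := by
  rw [slope, X_sub_C_mul_divByMonic_eq_sub_modByMonic, modByMonic_X_sub_C_eq_C_eval]

theorem IsSingular.slope_mem {f : K[X][Y]} {P : K × K} (hP : IsSingular f P) :
    slope f P.2 ∈ pointIdeal P := by
  have h := congrArg (fun G => (derivative G).evalEval P.1 P.2) (X_sub_C_mul_slope f P.2)
  simpa [derivative_mul, evalEval_add, evalEval_mul, evalEval_sub, hP.deriv_Y,
    mem_pointIdeal, evalEval_C] using h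

theorem IsSingular.exists_eval_eq {f : K[X][Y]} {P : K × K} (hP : IsSingular f P) :
    ∃ r : K[X], f.eval (C P.2) = (X - C P.1) * r ∧ C r ∈ pointIdeal P := by
  obtain ⟨r, hr⟩ : X - C P.1 ∣ f.eval (C P.2) := dvd_iff_isRoot.2 hP.evalEval_eq_zero
  refine ⟨r, hr, ?_⟩
  have h := hP.deriv_X
  rw [hr] at h
  simpa [derivative_mul, mem_pointIdeal, evalEval_C] using h

/-- The rational function `slope f y / (X - x)` maps the ideal of a singular point `(x, y)` of the
curve `f = 0` to itself, modulo `f`. -/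
theorem IsSingular.exists_dvd_sub {f : K[X][Y]} {P : K × K} (hP : IsSingular f P) {g : K[X][Y]}
    (hg : g ∈ pointIdeal P) :
    ∃ k ∈ pointIdeal P, f ∣ slope f P.2 * g - C (X - C P.1) * k := by
  obtain ⟨A, B, rfl⟩ := exists_of_mem_pointIdeal hg
  obtain ⟨r, hr, hrm⟩ := hP.exists_eval_eq
  refine ⟨slope f P.2 * A - C r * B,
    sub_mem (Ideal.mul_mem_right _ _ hP.slope_mem) (Ideal.mul_mem_right _ _ hrm), B, ?_⟩
  have h := X_sub_C_mul_slope f P.2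
  rw [hr, C_mul] at h
  linear_combination B * h


/-- The polynomial whose roots are the first coordinates of the points `P i`. -/
noncomputable def nodal {l : ℕ} (P : Fin l → K × K) : K[X] := ∏ i, (X - C (P i).1)

theorem nodal_monic {l : ℕ} (P : Fin l → K × K) : (nodal P).Monic :=
  monic_prod_of_monic _ _ fun i _ => monic_X_sub_C (P i).1

theorem natDegree_nodal {l : ℕ} (P : Fin l → K × K) : (nodal P).natDegree = l := by
  rw [nodal, natDegree_prod_of_monic _ _ fun i _ => monic_X_sub_C (P i).1]
  simp

theorem X_sub_C_mul_nodal_divByMonic {l : ℕ} (P : Fin l → K × K) (i : Fin l) :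
    (X - C (P i).1) * (nodal P /ₘ (X - C (P i).1)) = nodal P :=
  mul_divByMonic_eq_iff_isRoot.2 <|
    dvd_iff_isRoot.1 (Finset.dvd_prod_of_mem _ (Finset.mem_univ i))

/-- The numerator of `∑ i, c i * slope f (y i) / (X - x i)` over the denominator `nodal P`. -/
noncomputable def numerator {l : ℕ} (f : K[X][Y]) (P : Fin l → K × K) (c : Fin l → K) : K[X][Y] :=
  ∑ i, C (C (c i) * (nodal P /ₘ (X - C (P i).1))) * slope f (P i).2

theorem natDegree_slope {f : K[X][Y]} (y : K) :
    (slope f y).natDegree = f.natDegree - 1 := by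
  rw [slope, natDegree_divByMonic _ (monic_X_sub_C _), natDegree_X_sub_C]

theorem coeff_slope {f : K[X][Y]} (hf : f.Monic) (hp : 0 < f.natDegree) (y : K) :
    (slope f y).coeff (f.natDegree - 1) = 1 := by
  rw [slope, coeff_divByMonic_X_sub_C, Nat.sub_add_cancel hp]
  simp [hf.coeff_natDegree]

theorem degree_C_mul_le (a : K[X]) (G : K[X][Y]) : (C a * G).degree ≤ G.degree := by
  rw [← smul_eq_C_mul]
  exact degree_smul_le a G

theorem degree_numerator_lt {l : ℕ} {f : K[X][Y]} (hp : 0 < f.natDegree)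
    (P : Fin l → K × K) (c : Fin l → K) : (numerator f P c).degree < f.natDegree := by
  refine (degree_sum_le _ _).trans_lt ((Finset.sup_lt_iff (WithBot.bot_lt_coe _)).2 fun i _ => ?_)
  refine (degree_C_mul_le _ _).trans_lt (degree_le_natDegree.trans_lt ?_)
  rw [natDegree_slope]
  exact_mod_cast Nat.sub_lt hp one_pos

/-- If the functional `∑ i, c i * eval (P i)` annihilates all monomials of weight less than `p * q`,
then `numerator f P c` has smaller weight than its shape suggests. -/
theorem weightLE_numerator {l p q : ℕ} {f : K[X][Y]} (hW : WeightLE p q (p * q) f)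
    (P : Fin l → K × K) (c : Fin l → K)
    (hc : ∀ m n : ℕ, m * p + n * q < p * q → ∑ i, c i * ((P i).1 ^ m * (P i).2 ^ n) = 0) :
    WeightLE p q (p * l - p - q) (numerator f P c) := by
  intro m j hmj
  have key : ((numerator f P c).coeff j).coeff m =
      ∑ t ∈ Finset.Icc (j + 1) f.natDegree, ∑ x ∈ Finset.HasAntidiagonal.antidiagonal m,
        ∑ k ∈ Finset.Icc (x.1 + 1) (nodal P).natDegree,
          (nodal P).coeff k * (f.coeff t).coeff x.2 *
            ∑ i, c i * ((P i).1 ^ (k - (x.1 + 1)) * (P i).2 ^ (t - (j + 1))) := by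
    rw [numerator, finsetSum_coeff, finsetSum_coeff]
    simp_rw [coeff_C_mul, slope, coeff_divByMonic_X_sub_C, Finset.mul_sum, finsetSum_coeff]
    rw [Finset.sum_comm]
    refine Finset.sum_congr rfl fun t _ => ?_
    have hx : ∀ i : Fin l, (C (c i) * (nodal P /ₘ (X - C (P i).1)) *
        (C (P i).2 ^ (t - (j + 1)) * f.coeff t)).coeff m =
        ∑ x ∈ Finset.HasAntidiagonal.antidiagonal m,
          ∑ k ∈ Finset.Icc (x.1 + 1) (nodal P).natDegree,
          (nodal P).coeff k * (f.coeff t).coeff x.2 *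
            (c i * ((P i).1 ^ (k - (x.1 + 1)) * (P i).2 ^ (t - (j + 1)))) := by
      intro i
      rw [coeff_mul]
      refine Finset.sum_congr rfl fun x _ => ?_
      rw [coeff_C_mul, ← C_pow, coeff_C_mul, coeff_divByMonic_X_sub_C, Finset.mul_sum,
        Finset.sum_mul]
      exact Finset.sum_congr rfl fun k _ => by ring
    simp_rw [hx]
    rw [Finset.sum_comm]
    exact Finset.sum_congr rfl fun x _ => Finset.sum_comm
  rw [key] at hmj
  obtain ⟨t, ht, hne⟩ := Finset.exists_ne_zero_of_sum_ne_zero hmj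
  obtain ⟨x, hx, hne⟩ := Finset.exists_ne_zero_of_sum_ne_zero hne
  obtain ⟨k, hk, hne⟩ := Finset.exists_ne_zero_of_sum_ne_zero hne
  have h₁ := hW x.2 t (right_ne_zero_of_mul (left_ne_zero_of_mul hne))
  have h₂ := not_lt.1 (mt (hc _ _) (right_ne_zero_of_mul hne))
  rw [Finset.mem_Icc] at ht hk
  rw [natDegree_nodal] at hk
  rw [Finset.HasAntidiagonal.mem_antidiagonal] at hx
  obtain ⟨u, rfl⟩ := Nat.exists_eq_add_of_le ht.1
  obtain ⟨v, rfl⟩ := Nat.exists_eq_add_of_le hk.1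
  rw [Nat.add_sub_cancel_left, Nat.add_sub_cancel_left] at h₂
  have h₃ : (p : ℤ) * (x.1 + 1 + v) ≤ p * l := by
    have := hk.2
    gcongr
    exact_mod_cast this
  have h₄ : (p * q : ℤ) ≤ v * p + u * q := by exact_mod_cast h₂
  subst hx
  push_cast at h₁ ⊢
  linarith

/-- The rational function `numerator f P c / nodal P` maps the product of the ideals of the
singular points `P i` to itself, modulo `f`. -/
theorem exists_dvd_numerator_mul_sub {l : ℕ} {f : K[X][Y]} {P : Fin l → K × K}
    (hP : ∀ i, IsSingular f (P i)) (c : Fin l → K) {h : K[X][Y]}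
    (hh : h ∈ ∏ i, pointIdeal (P i)) :
    ∃ k ∈ ∏ i, pointIdeal (P i), f ∣ numerator f P c * h - C (nodal P) * k := by
  have hterm : ∀ i, ∃ k ∈ ∏ i, pointIdeal (P i),
      f ∣ slope f (P i).2 * h - C (X - C (P i).1) * k := by
    intro i
    rw [← Finset.mul_prod_erase _ _ (Finset.mem_univ i)] at hh ⊢
    refine Submodule.mul_induction_on hh (fun g hg h' hh' => ?_) ?_
    · obtain ⟨k, hk, hdvd⟩ := (hP i).exists_dvd_sub hg
      refine ⟨k * h', Ideal.mul_mem_mul hk hh', ?_⟩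
      convert hdvd.mul_right h' using 1
      ring
    · rintro h₁ h₂ ⟨k₁, hk₁, hd₁⟩ ⟨k₂, hk₂, hd₂⟩
      refine ⟨k₁ + k₂, add_mem hk₁ hk₂, ?_⟩
      convert dvd_add hd₁ hd₂ using 1
      ring
  choose k hk hdvd using hterm
  refine ⟨∑ i, C (C (c i)) * k i, sum_mem fun i _ => Ideal.mul_mem_left _ _ (hk i), ?_⟩
  rw [numerator, Finset.sum_mul, Finset.mul_sum, ← Finset.sum_sub_distrib]
  refine Finset.dvd_sum fun i _ => ?_
  convert (hdvd i).mul_left (C (C (c i) * (nodal P /ₘ (X - C (P i).1)))) using 1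
  have hD := congrArg C (X_sub_C_mul_nodal_divByMonic P i)
  rw [C_mul] at hD
  rw [C_mul]
  linear_combination C (C (c i)) * k i * hD

theorem C_nodal_mem {l : ℕ} (P : Fin l → K × K) : C (nodal P) ∈ ∏ i, pointIdeal (P i) := by
  rw [nodal, map_prod]
  refine Ideal.prod_mem_prod fun i _ => ?_
  simp [mem_pointIdeal, evalEval_C]

theorem exists_dvd_numerator_pow_sub {l : ℕ} {f : K[X][Y]} {P : Fin l → K × K}
    (hP : ∀ i, IsSingular f (P i)) (c : Fin l → K) (n : ℕ) :
    ∃ h ∈ ∏ i, pointIdeal (P i),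
      f ∣ numerator f P c ^ n * C (nodal P) - C (nodal P) ^ n * h := by
  induction n with
  | zero => exact ⟨C (nodal P), C_nodal_mem P, by simp⟩
  | succ n ih =>
    obtain ⟨h, hh, hdvd⟩ := ih
    obtain ⟨k, hk, hdvd'⟩ := exists_dvd_numerator_mul_sub hP c hh
    refine ⟨k, hk, ?_⟩
    convert dvd_add (hdvd.mul_left (numerator f P c)) (hdvd'.mul_left (C (nodal P) ^ n)) using 1
    ring

/-- A polynomial in `K[X][Y]` separating the point `P i` from the other points `P j`. -/
theorem exists_separating {l : ℕ} {P : Fin l → K × K} (hinj : Function.Injective P) (i : Fin l) :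
    ∃ u : K[X][Y], u - 1 ∈ pointIdeal (P i) ∧ ∀ j, j ≠ i → u ∈ pointIdeal (P j) := by
  have hlin : ∀ j, j ≠ i → ∃ u : K[X][Y], u - 1 ∈ pointIdeal (P i) ∧ u ∈ pointIdeal (P j) := by
    intro j hj
    by_cases h : (P i).1 = (P j).1
    · have h2 : (P i).2 - (P j).2 ≠ 0 := sub_ne_zero.2 fun h' => hj (hinj (Prod.ext h h')).symm
      refine ⟨C (C ((P i).2 - (P j).2)⁻¹) * (X - C (C (P j).2)), ?_, ?_⟩ <;>
        simp [mem_pointIdeal, evalEval_C, evalEval_mul, evalEval_sub, h2]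
    · have h2 : (P i).1 - (P j).1 ≠ 0 := sub_ne_zero.2 h
      refine ⟨C (C ((P i).1 - (P j).1)⁻¹) * C (X - C (P j).1), ?_, ?_⟩ <;>
        simp [mem_pointIdeal, evalEval_C, evalEval_mul, evalEval_sub, h2, -map_sub]
  choose! u hu₁ hu₂ using hlin
  refine ⟨∏ j ∈ Finset.univ.erase i, u j, ?_, fun j hj => ?_⟩
  · rw [mem_pointIdeal, evalEval_sub, evalEval_prod, evalEval_one, sub_eq_zero]
    refine Finset.prod_eq_one fun j hj => ?_
    have := hu₁ j (Finset.ne_of_mem_erase hj)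
    rwa [mem_pointIdeal, evalEval_sub, evalEval_one, sub_eq_zero] at this
  · exact Ideal.mem_of_dvd _
      (Finset.dvd_prod_of_mem _ (Finset.mem_erase.2 ⟨hj, Finset.mem_univ j⟩)) (hu₂ j hj)

/-- The rational functions `slope f y / (X - x)` at distinct singular points `(x, y)` are linearly
independent modulo `f`. -/
theorem eq_zero_of_numerator_eq_zero {l : ℕ} {f : K[X][Y]} (hf : f.Monic) (hp : 0 < f.natDegree)
    {P : Fin l → K × K} (hinj : Function.Injective P) (hP : ∀ i, IsSingular f (P i))
    {c : Fin l → K} (hb : numerator f P c = 0) : c = 0 := by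
  funext i
  obtain ⟨u, hui, huj⟩ := exists_separating hinj i
  have hterm : ∀ j, ∃ k, f ∣ slope f (P j).2 * (if j = i then u - 1 else u)
      - C (X - C (P j).1) * k := by
    intro j
    have hmem : (if j = i then u - 1 else u) ∈ pointIdeal (P j) := by
      split_ifs with h
      · rwa [h]
      · exact huj j h
    obtain ⟨k, -, hk⟩ := (hP j).exists_dvd_sub hmem
    exact ⟨k, hk⟩
  choose k hk using hterm
  set E : Fin l → K[X] := fun j => nodal P /ₘ (X - C (P j).1) with hE
  have hED : ∀ j, C (nodal P) = C (X - C (P j).1) * C (E j) := fun j => by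
    rw [← C_mul, X_sub_C_mul_nodal_divByMonic]
  have hsum : f ∣ ∑ j, C (C (c j) * E j) * (slope f (P j).2 * (if j = i then u - 1 else u)
      - C (X - C (P j).1) * k j) := Finset.dvd_sum fun j _ => (hk j).mul_left _
  set g : K[X][Y] := ∑ j, C (C (c j)) * k j with hg
  have hsum' : ∑ j, C (C (c j) * E j) * (slope f (P j).2 * (if j = i then u - 1 else u)
      - C (X - C (P j).1) * k j) = -(C (C (c i) * E i) * slope f (P i).2 + C (nodal P) * g) := by
    have h₁ : ∀ j, C (C (c j) * E j) * (slope f (P j).2 * (if j = i then u - 1 else u)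
        - C (X - C (P j).1) * k j) = u * (C (C (c j) * E j) * slope f (P j).2)
        - (if j = i then C (C (c j) * E j) * slope f (P j).2 else 0)
        - C (nodal P) * (C (C (c j)) * k j) := by
      intro j
      rw [hED j, C_mul]
      split_ifs <;> ring
    have h₂ : ∑ j, C (C (c j) * E j) * slope f (P j).2 = 0 := hb
    simp_rw [h₁]
    rw [Finset.sum_sub_distrib, Finset.sum_sub_distrib, ← Finset.mul_sum, h₂, ← Finset.mul_sum,
      Finset.sum_ite_eq' Finset.univ i, if_pos (Finset.mem_univ i)]
    ring
  replace hsum : f ∣ C (C (c i) * E i) * slope f (P i).2 + C (nodal P) * g := by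
    obtain ⟨t, ht⟩ := hsum
    exact ⟨-t, by linear_combination hsum' - ht⟩
  have hred : f ∣ C (C (c i) * E i) * slope f (P i).2 + C (nodal P) * (g %ₘ f) := by
    convert dvd_sub hsum ((dvd_mul_right f (g /ₘ f)).mul_left (C (nodal P))) using 1
    linear_combination C (nodal P) * modByMonic_add_div g f
  have hfdeg : f.degree = f.natDegree := degree_eq_natDegree hf.ne_zero
  have hzero : C (C (c i) * E i) * slope f (P i).2 + C (nodal P) * (g %ₘ f) = 0 := by
    refine eq_zero_of_dvd_of_degree_lt hred ((degree_add_le _ _).trans_lt (max_lt ?_ ?_))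
    · refine (degree_C_mul_le _ _).trans_lt (degree_le_natDegree.trans_lt ?_)
      rw [natDegree_slope, hfdeg]
      exact_mod_cast Nat.sub_lt hp one_pos
    · exact (degree_C_mul_le _ _).trans_lt (degree_modByMonic_lt _ hf)
  have hcoeff := congrArg (coeff · (f.natDegree - 1)) hzero
  simp only [coeff_add, coeff_C_mul, coeff_slope hf hp, coeff_zero, mul_one] at hcoeff
  have hE0 : E i ≠ 0 := fun h0 => by
    have hD := hED i
    rw [h0, C_0, mul_zero, C_eq_zero] at hD
    exact (nodal_monic P).ne_zero hD
  have hfin : C (c i) + (X - C (P i).1) * (g %ₘ f).coeff (f.natDegree - 1) = 0 := by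
    refine mul_left_cancel₀ hE0 ?_
    rw [← X_sub_C_mul_nodal_divByMonic P i] at hcoeff
    rw [mul_zero, ← hcoeff]
    simp only [hE]
    ring
  simpa using congrArg (eval (P i).1) hfin

/-- Distinct singular points of a curve `f = 0`, where `f` is radical, monic of degree `p` in `Y`
and of weight `p * q`, impose independent conditions on polynomials of weight less than `p * q`. -/
theorem eq_zero_of_forall_sum_eq_zero {l p q : ℕ} {f : K[X][Y]} (hf : f.Monic)
    (hdeg : f.natDegree = p) (hp : 0 < p) (hW : WeightLE p q (p * q) f) (hrad : IsRadical f)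
    {P : Fin l → K × K} (hinj : Function.Injective P) (hP : ∀ i, IsSingular f (P i))
    {c : Fin l → K}
    (hc : ∀ m n : ℕ, m * p + n * q < p * q → ∑ i, c i * ((P i).1 ^ m * (P i).2 ^ n) = 0) :
    c = 0 := by
  set b := numerator f P c with hb
  set D := nodal P with hD
  set n : ℕ := l + 1 with hn
  obtain ⟨h, -, hdvd⟩ := exists_dvd_numerator_pow_sub hP c n
  rw [← hb, ← hD] at hdvd
  have hbW : WeightLE p q (n * (p * l - p - q) + p * l) (b ^ n * C D) :=
    ((weightLE_numerator hW P c hc).pow n).mul (.C_of_natDegree_le (natDegree_nodal P).le)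
  have hmod : (b ^ n * C D) %ₘ f = C (D ^ n) * (h %ₘ f) := by
    have h₁ : (b ^ n * C D) %ₘ f = (C (D ^ n) * h) %ₘ f := by
      rw [← sub_eq_zero, ← sub_modByMonic, modByMonic_eq_zero_iff_dvd hf, C_pow]
      exact hdvd
    rw [h₁, ← smul_eq_C_mul, ← smul_eq_C_mul, smul_modByMonic]
  have hh : h %ₘ f = 0 := by
    refine eq_zero_of_weightLE_C_mul ((nodal_monic P).pow n)
      (hmod ▸ hbW.modByMonic hf hdeg hp hW) ?_
    rw [(nodal_monic P).natDegree_pow, natDegree_nodal, hn]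
    push_cast
    have : (0 : ℤ) < p := by exact_mod_cast hp
    have : (0 : ℤ) ≤ q * (l + 1) := by positivity
    nlinarith
  rw [hh, mul_zero, modByMonic_eq_zero_iff_dvd hf] at hmod
  have hbD : f ∣ C D * b := by
    refine hrad n _ (hmod.trans ⟨C D ^ l, ?_⟩)
    rw [hn]
    ring
  have hfdeg : f.degree = f.natDegree := degree_eq_natDegree hf.ne_zero
  have hbD0 : C D * b = 0 := eq_zero_of_dvd_of_degree_lt hbD <|
    (degree_C_mul_le _ _).trans_lt <| hfdeg ▸ degree_numerator_lt (hdeg ▸ hp) P c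
  refine eq_zero_of_numerator_eq_zero hf (hdeg ▸ hp) hinj hP ?_
  exact (mul_eq_zero.1 hbD0).resolve_left (C_ne_zero.2 (nodal_monic P).ne_zero)

/-! ### Transfer to polynomials in two variables -/

theorem eval_equivMvPolynomial (x y : K) (g : K[X][Y]) :
    MvPolynomial.eval ![x, y] (Bivariate.equivMvPolynomial K g) = g.evalEval x y := by
  induction g using Polynomial.induction_on' with
  | add g h hg hh => rw [map_add, map_add, hg, hh, evalEval_add]
  | monomial n g =>
    induction g using Polynomial.induction_on' with
    | add g h hg hh => rw [map_add, map_add, map_add, hg, hh, evalEval_add]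
    | monomial m r =>
      simp_rw [← C_mul_X_pow_eq_monomial]
      simp [evalEval_mul, evalEval_pow, evalEval_C]

theorem eval_pderiv_zero_equivMvPolynomial (x y : K) (g : K[X][Y]) :
    MvPolynomial.eval ![x, y] (MvPolynomial.pderiv 0 (Bivariate.equivMvPolynomial K g)) =
      (derivative (g.eval (C y))).eval x := by
  induction g using Polynomial.induction_on' with
  | add g h hg hh => rw [map_add, map_add, map_add, hg, hh, eval_add, derivative_add, eval_add]
  | monomial n g =>
    induction g using Polynomial.induction_on' with
    | add g h hg hh =>
      rw [map_add, map_add, map_add, map_add, hg, hh, eval_add, derivative_add, eval_add]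
    | monomial m r =>
      simp_rw [← C_mul_X_pow_eq_monomial]
      simp only [eval_mul, eval_C, eval_pow, eval_X, ← C_pow, derivative_mul, derivative_C]
      simp [derivative_X_pow]
      ring

theorem isSingular_of_isSingAt {K : Type} [Field K] {g : K[X][Y]} {P : K × K}
    (h : IsSingAt K (Bivariate.equivMvPolynomial K g) P) : IsSingular g P where
  evalEval_eq_zero := by rw [← eval_equivMvPolynomial]; exact h.1
  deriv_X := by rw [← eval_pderiv_zero_equivMvPolynomial]; exact h.2.1
  deriv_Y := by
    rw [← eval_equivMvPolynomial, ← Bivariate.pderiv_one_equivMvPolynomial]; exact h.2.2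

/-- The normed Weierstraß polynomial, as a polynomial in `Y` over `K[X]`. -/
noncomputable def wBivariate {K : Type} [Field K] (p q : ℕ) (a : idxSet p q → K) : K[X][Y] :=
  X ^ p - C (X ^ q) +
    ∑ i : idxSet p q, C (C (a i) * X ^ (i : ℕ × ℕ).1) * X ^ (i : ℕ × ℕ).2

theorem equivMvPolynomial_wBivariate {K : Type} [Field K] (p q : ℕ) (a : idxSet p q → K) :
    Bivariate.equivMvPolynomial K (wBivariate p q a) = wPoly K p q a := by
  simp [wBivariate, wPoly, map_sum]

theorem degree_wBivariate_sub_lt {K : Type} [Field K] {p q : ℕ} (hp : 0 < p)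
    (a : idxSet p q → K) : (wBivariate p q a - X ^ p).degree < (p : WithBot ℕ) := by
  have h : wBivariate p q a - X ^ p = -(C (X ^ q) : K[X][Y]) +
      ∑ i : idxSet p q, C (C (a i) * X ^ (i : ℕ × ℕ).1) * X ^ (i : ℕ × ℕ).2 := by
    rw [wBivariate]
    ring
  rw [h]
  refine (degree_add_le _ _).trans_lt (max_lt ?_ ?_)
  · rw [degree_neg]
    exact degree_C_le.trans_lt (by exact_mod_cast hp)
  · refine (degree_sum_le _ _).trans_lt ((Finset.sup_lt_iff (WithBot.bot_lt_coe _)).2 fun i _ => ?_)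
    refine (degree_C_mul_X_pow_le _ _).trans_lt ?_
    have := i.2
    simp only [idxSet, Finset.mem_filter, Finset.mem_product, Finset.mem_range] at this
    exact_mod_cast this.1.2

theorem wBivariate_monic {K : Type} [Field K] {p q : ℕ} (hp : 0 < p) (a : idxSet p q → K) :
    (wBivariate p q a).Monic := by
  rw [← sub_add_cancel (wBivariate p q a) (X ^ p), add_comm]
  exact monic_X_pow_add (degree_wBivariate_sub_lt hp a)

theorem natDegree_wBivariate {K : Type} [Field K] {p q : ℕ} (hp : 0 < p) (a : idxSet p q → K) :
    (wBivariate p q a).natDegree = p := by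
  refine natDegree_eq_of_degree_eq_some ?_
  rw [← sub_add_cancel (wBivariate p q a) (X ^ p), degree_add_eq_right_of_degree_lt, degree_X_pow]
  rw [degree_X_pow]
  exact degree_wBivariate_sub_lt hp a

theorem weightLE_wBivariate {K : Type} [Field K] (p q : ℕ) (a : idxSet p q → K) :
    WeightLE p q (p * q) (wBivariate p q a) := by
  intro m n hmn
  by_contra hlt
  push Not at hlt
  refine hmn ?_
  have hY : (((X : K[X][Y]) ^ p).coeff n).coeff m = 0 := by
    rw [coeff_X_pow]
    split_ifs with h
    · rw [coeff_one, if_neg]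
      rintro rfl
      subst h
      push_cast at hlt
      linarith
    · exact coeff_zero m
  have hX : ((C (X ^ q) : K[X][Y]).coeff n).coeff m = 0 := by
    rw [coeff_C]
    split_ifs with h
    · rw [coeff_X_pow, if_neg]
      rintro rfl
      subst h
      push_cast at hlt
      linarith
    · exact coeff_zero m
  have hI : ∀ i : idxSet p q,
      ((C (C (a i) * X ^ (i : ℕ × ℕ).1) * X ^ (i : ℕ × ℕ).2 : K[X][Y]).coeff n).coeff m = 0 := by
    intro i
    rw [coeff_C_mul_X_pow]
    split_ifs with h
    · rw [coeff_C_mul_X_pow, if_neg]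
      rintro rfl
      subst h
      have := i.2
      simp only [idxSet, Finset.mem_filter] at this
      have : ((i : ℕ × ℕ).1 * p + (i : ℕ × ℕ).2 * q : ℤ) < p * q := by exact_mod_cast this.2
      linarith
    · exact coeff_zero m
  rw [wBivariate, coeff_add, coeff_sub, coeff_add, coeff_sub, finsetSum_coeff, finsetSum_coeff,
    hY, hX, Finset.sum_eq_zero fun i _ => hI i]
  simp

/-- Over an algebraically closed field, a polynomial all of whose singular points are nodes is
squarefree. -/
theorem squarefree_of_forall_isNodeAt {K : Type} [Field K] [IsAlgClosed K]
    {F : MvPolynomial (Fin 2) K} (h : ∀ Q : K × K, IsSingAt K F Q → IsNodeAt K F Q) :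
    Squarefree F := by
  rintro G ⟨H, rfl⟩
  by_contra hG
  obtain ⟨x, hx⟩ : ∃ x : Fin 2 → K, MvPolynomial.eval x G = 0 := by
    by_contra hne
    push Not at hne
    have hrad := MvPolynomial.vanishingIdeal_zeroLocus_eq_radical (K := K) (Ideal.span {G})
    have hempty : MvPolynomial.zeroLocus K (Ideal.span {G}) = ∅ := by
      rw [MvPolynomial.zeroLocus_span]
      refine Set.eq_empty_of_forall_notMem fun x hx => hne x ?_
      simpa using hx G rfl
    rw [hempty, MvPolynomial.vanishingIdeal_empty] at hrad
    exact hG (Ideal.span_singleton_eq_top.1 (Ideal.radical_eq_top.1 hrad.symm))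
  have hx' : ![x 0, x 1] = x := by
    ext i
    fin_cases i <;> rfl
  have hsing : IsSingAt K (G * G * H) (x 0, x 1) := by
    simp [IsSingAt, hx', hx]
  refine (h _ hsing).2 ?_
  simp [hessPoly, hx', hx]
  ring

theorem isRadical_wBivariate {K : Type} [Field K] [IsAlgClosed K] {p q : ℕ} {a : idxSet p q → K}
    (h : ∀ Q : K × K, IsSingAt K (wPoly K p q a) Q → IsNodeAt K (wPoly K p q a) Q) :
    IsRadical (wBivariate p q a) := by
  intro n g hg
  have hg' := _root_.map_dvd (Bivariate.equivMvPolynomial K) hg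
  rw [map_pow, equivMvPolynomial_wBivariate] at hg'
  have := (squarefree_of_forall_isNodeAt h).isRadical n _ hg'
  rw [← equivMvPolynomial_wBivariate] at this
  exact (_root_.map_dvd_iff (Bivariate.equivMvPolynomial K)).1 this

end Polynomial.NodeVectors

/-- **Lemma (rank of the node matrix).** If `C_a` is a nodal curve with `l ≥ 1` pairwise
distinct nodes `(ξ_1,η_1), …, (ξ_l,η_l)`, then the vectors
`v_i = (ξ_i^ν η_i^μ)_{(ν,μ) ∈ I} ∈ K^I` are linearly independent over `K`; equivalently the
`l × n` matrix `(ξ_i^ν η_i^μ)` has rank `l`. -/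
theorem node_vectors_linearIndependent
    (K : Type) [Field K] [IsAlgClosed K] [CharZero K]
    (p q : ℕ) (hp : 1 < p) (hpq : p < q) (hco : Nat.Coprime p q)
    (a : idxSet p q → K)
    (hnodal : ∀ Q : K × K, IsSingAt K (wPoly K p q a) Q → IsNodeAt K (wPoly K p q a) Q)
    (l : ℕ) (hl : 1 ≤ l) (P : Fin l → K × K) (hPinj : Function.Injective P)
    (hPnode : ∀ i, IsNodeAt K (wPoly K p q a) (P i)) :
    LinearIndependent K
        (fun i : Fin l => fun j : idxSet p q => (P i).1 ^ (j : ℕ × ℕ).1 * (P i).2 ^ (j : ℕ × ℕ).2) ∧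
      (Matrix.of fun (i : Fin l) (j : idxSet p q) =>
          (P i).1 ^ (j : ℕ × ℕ).1 * (P i).2 ^ (j : ℕ × ℕ).2).rank = l := by
  have hli : LinearIndependent K
      (fun i : Fin l => fun j : idxSet p q =>
        (P i).1 ^ (j : ℕ × ℕ).1 * (P i).2 ^ (j : ℕ × ℕ).2) := by
    rw [Fintype.linearIndependent_iff]
    intro c hc
    have hp0 : 0 < p := by omega
    refine congrFun (Polynomial.NodeVectors.eq_zero_of_forall_sum_eq_zero
      (Polynomial.NodeVectors.wBivariate_monic hp0 a)
      (Polynomial.NodeVectors.natDegree_wBivariate hp0 a) hp0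
      (Polynomial.NodeVectors.weightLE_wBivariate p q a)
      (Polynomial.NodeVectors.isRadical_wBivariate hnodal) hPinj
      (fun i => Polynomial.NodeVectors.isSingular_of_isSingAt ?_) fun m n hmn => ?_)
    · rw [Polynomial.NodeVectors.equivMvPolynomial_wBivariate]
      exact (hPnode i).1
    · have hmem : (m, n) ∈ idxSet p q := by
        simp only [idxSet, Finset.mem_filter, Finset.mem_product, Finset.mem_range]
        refine ⟨⟨?_, ?_⟩, hmn⟩ <;> nlinarith
      simpa using congrFun hc ⟨(m, n), hmem⟩
  refine ⟨hli, ?_⟩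
  have hrank := LinearIndependent.rank_matrix (M := Matrix.of fun (i : Fin l) (j : idxSet p q) =>
    (P i).1 ^ (j : ℕ × ℕ).1 * (P i).2 ^ (j : ℕ × ℕ).2) hli
  rwa [Fintype.card_fin] at hrank
end

section
/- Let a, b, c ∈ K with c ≠ 0 and let G(X,Y) = (Y−b)^p − (X−a)^q + c(X−a)(Y−b) ∈ K[X,Y]. Then G is a normed Weierstraß polynomial of type p,q (i.e., G = Y^p − X^q + Σ_{(ν,μ)∈I} a_{νμ} X^ν Y^μ for suitable a_{νμ} ∈ K), and the curve G = 0 has exactly one singular point, namely (a,b), and this singular point is a node. -/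
open MvPolynomial

/-- A binomial power `(X + C r)^n` differs from `X^n` by an element of any submodule containing
the lower powers of the variable. -/
lemma X_add_C_pow_sub_X_pow_mem {K σ : Type*} [CommRing K] (S : Submodule K (MvPolynomial σ K))
    (i : σ) (r : K) (n : ℕ) (h : ∀ m < n, (X i : MvPolynomial σ K) ^ m ∈ S) :
    (X i + C r) ^ n - X i ^ n ∈ S := by
  rw [add_pow, Finset.sum_range_succ]
  simp only [Nat.sub_self, pow_zero, mul_one, Nat.choose_self, Nat.cast_one, add_sub_cancel_right]
  refine S.sum_mem fun m hm => ?_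
  have hterm : (X i : MvPolynomial σ K) ^ m * C r ^ (n - m) * (n.choose m : MvPolynomial σ K) =
      (r ^ (n - m) * (n.choose m : K)) • X i ^ m := by
    rw [smul_eq_C_mul, map_mul, map_pow, map_natCast]
    ring
  rw [hterm]
  exact S.smul_mem _ (h m (Finset.mem_range.mp hm))

lemma mem_idxSet {p q : ℕ} {t : ℕ × ℕ} : t ∈ idxSet p q ↔ t.1 * p + t.2 * q < p * q := by
  simp only [idxSet, Finset.mem_filter, Finset.mem_product, Finset.mem_range, and_iff_right_iff_imp]
  intro h
  constructor <;> by_contra! hle <;> nlinarith [Nat.zero_le (t.1 * p), Nat.zero_le (t.2 * q)]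

/-- The curve polynomial is a normed Weierstraß polynomial. -/
lemma exists_eq_wPoly (K : Type) [CommRing K] (p q : ℕ) (hp : 1 < p) (hpq : p < q) (a b c : K) :
    ∃ co : idxSet p q → K,
      (X 1 - C b) ^ p - (X 0 - C a) ^ q + C c * (X 0 - C a) * (X 1 - C b) = wPoly K p q co := by
  let v : idxSet p q → MvPolynomial (Fin 2) K :=
    fun i => X 0 ^ (i : ℕ × ℕ).1 * X 1 ^ (i : ℕ × ℕ).2
  let S := Submodule.span K (Set.range v)
  have hmem (i j : ℕ) (h : i * p + j * q < p * q) :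
      (X 0 ^ i * X 1 ^ j : MvPolynomial (Fin 2) K) ∈ S :=
    Submodule.subset_span ⟨⟨(i, j), mem_idxSet.mpr h⟩, rfl⟩
  have hY := X_add_C_pow_sub_X_pow_mem S 1 (-b) p fun m hm => by
    simpa using hmem 0 m (by nlinarith)
  have hX := X_add_C_pow_sub_X_pow_mem S 0 (-a) q fun m hm => by
    simpa using hmem m 0 (by nlinarith)
  have h11 := S.smul_mem c (hmem 1 1 (by nlinarith))
  have h10 := S.smul_mem (c * b) (hmem 1 0 (by nlinarith))
  have h01 := S.smul_mem (c * a) (hmem 0 1 (by nlinarith))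
  have h00 := S.smul_mem (c * a * b) (hmem 0 0 (by nlinarith))
  have hG := S.add_mem (S.sub_mem hY hX)
    (S.add_mem (S.sub_mem (S.sub_mem h11 h10) h01) h00)
  obtain ⟨co, hco⟩ := (Submodule.mem_span_range_iff_exists_fun K).mp hG
  refine ⟨co, ?_⟩
  have hsum : ∑ i : idxSet p q, C (co i) * X 0 ^ (i : ℕ × ℕ).1 * X 1 ^ (i : ℕ × ℕ).2 =
      ∑ i, co i • v i :=
    Finset.sum_congr rfl fun i _ => by rw [smul_eq_C_mul, mul_assoc]
  rw [wPoly, hsum, hco]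
  simp only [smul_eq_C_mul, map_mul, map_neg]
  ring

/-- The origin is the only singular point of `y^p - x^q + c x y = 0`. -/
lemma eq_zero_of_critical {K : Type*} [Field K] [CharZero K] {p q : ℕ} (hp : 1 < p) (hpq : p < q)
    {c x y : K} (hc : c ≠ 0) (h : y ^ p - x ^ q + c * x * y = 0)
    (hx : -((q : K) * x ^ (q - 1)) + c * y = 0) (hy : (p : K) * y ^ (p - 1) + c * x = 0) :
    x = 0 ∧ y = 0 := by
  have hxq : x ^ q = x ^ (q - 1) * x := (pow_sub_one_mul (by lia) x).symm
  have hyp : y ^ p = y ^ (p - 1) * y := (pow_sub_one_mul (by lia) y).symm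
  have hprod : ((p : K) * q - p - q) * (c * x * y) = 0 := by
    rw [hxq, hyp] at h
    linear_combination (p : K) * q * h - (p : K) * x * hx - (q : K) * y * hy
  have hne : (p : K) * q - p - q ≠ 0 := by
    intro h0
    have : p * q = p + q := by
      exact_mod_cast (by linear_combination h0 : (p : K) * q = p + q)
    nlinarith
  have hxy := (mul_eq_zero.mp hprod).resolve_left hne
  have hp1 : p - 1 ≠ 0 := by lia
  have hq1 : q - 1 ≠ 0 := by lia
  rcases mul_eq_zero.mp hxy with h' | h'
  · have hx0 := (mul_eq_zero.mp h').resolve_left hc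
    simp_all
  · simp_all

lemma isSingAt_iff {K : Type} [Field K] [CharZero K] {p q : ℕ} (hp : 1 < p) (hpq : p < q)
    (a b : K) {c : K} (hc : c ≠ 0) (P : K × K) :
    IsSingAt K ((X 1 - C b) ^ p - (X 0 - C a) ^ q + C c * (X 0 - C a) * (X 1 - C b)) P ↔
      P = (a, b) := by
  obtain ⟨x, y⟩ := P
  simp only [IsSingAt, Derivation.leibniz, Derivation.leibniz_pow, map_add, map_sub, map_mul,
    map_pow, pderiv_C, pderiv_X, eval_X, eval_C, Prod.mk.injEq]
  simp only [smul_eq_mul, nsmul_eq_mul, map_mul, map_add, map_pow, map_sub, map_natCast,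
    eval_X, eval_C, Pi.single_apply, Matrix.cons_val_zero, Matrix.cons_val_one]
  have hp1 : p - 1 ≠ 0 := by lia
  have hq1 : q - 1 ≠ 0 := by lia
  constructor
  · rintro ⟨h, hx, hy⟩
    have := eq_zero_of_critical hp hpq (x := x - a) (y := y - b) hc h
      (by simp at hx; linear_combination hx) (by simp at hy; linear_combination hy)
    exact ⟨sub_eq_zero.mp this.1, sub_eq_zero.mp this.2⟩
  · rintro ⟨rfl, rfl⟩
    simp [hp1, hq1, show p ≠ 0 by lia, show q ≠ 0 by lia]

lemma eval_hessPoly {K : Type} [CommRing K] {p q : ℕ} (hq : 2 < q) (a b c : K) :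
    eval ![a, b] (hessPoly K
      ((X 1 - C b) ^ p - (X 0 - C a) ^ q + C c * (X 0 - C a) * (X 1 - C b))) = -c ^ 2 := by
  have hq2 : q - 1 - 1 ≠ 0 := by lia
  simp [hessPoly, Derivation.leibniz, Derivation.leibniz_pow, pderiv_X, hq2]

/-- The curve `(Y−b)^p − (X−a)^q + c(X−a)(Y−b) = 0` (with `c ≠ 0`) is given by a normed
Weierstraß polynomial of type `p,q`, and it has exactly one singular point, namely `(a,b)`,
which is a node. -/
theorem example_curve_with_one_node
    (K : Type) [Field K] [IsAlgClosed K] [CharZero K]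
    (p q : ℕ) (hp : 1 < p) (hpq : p < q) (hco : Nat.Coprime p q)
    (a b c : K) (hc : c ≠ 0) :
    ∃ co : idxSet p q → K,
      (X 1 - C b) ^ p - (X 0 - C a) ^ q + C c * (X 0 - C a) * (X 1 - C b) = wPoly K p q co ∧
      (∀ P : K × K,
        IsSingAt K (wPoly K p q co) P ↔ P = (a, b)) ∧
      IsNodeAt K (wPoly K p q co) (a, b) := by
  obtain ⟨co, h⟩ := exists_eq_wPoly K p q hp hpq a b c
  refine ⟨co, h, ?_, ?_⟩
  · rw [← h]
    exact isSingAt_iff hp hpq a b hc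
  · rw [← h]
    refine ⟨(isSingAt_iff hp hpq a b hc _).mpr rfl, ?_⟩
    rw [eval_hessPoly (by lia)]
    exact neg_ne_zero.mpr (pow_ne_zero 2 hc)
end
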